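/- arXiv:1608.06596 — 4 statements merged into one kernel-verified Lean document; each statement's English description precedes it below -/
import Mathlib

section
/- For n qudits of prime dimension p and any w ≥ 1, the abelian group C^w_d of diagonal gates in the w-th level of the Clifford hierarchy is isomorphic to U(1) × ∏_a Z_{p^{m(w,a)}}, where the product runs over all nonzero vectors a ∈ {0,1,…,p−1}^n with wt(a) ≤ w, m(w,a) is the largest integer m ≥ 1 with (p−1)(m−1) + wt(a) ≤ w (i.e. m(w,a) = ⌊(w − wt(a))/(p−1)⌋ + 1), and the U(1) factor corresponds to global phases. -/
/-!
A diagonal unitary is a phase function `u : Z_p^n → U(1)`, written additively here (values in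
`Additive Circle`). Conjugating a Pauli `D X^b` by `diag(u)` multiplies it by the diagonal gate with
phase `u(r) - u(r - b)`, and multiplication by Paulis preserves every level of the hierarchy. Hence
`diag(u) ∈ C^{k+1}` iff all finite differences of `u` are phases of gates in `C^k`
(`monoMat_mem_iff`), and `C^w_d` consists of the non-classical polynomials of degree at most `w`:
functions killed by all `(w + 1)`-fold differences. Equivalently, extending `u` to an additive
functional on the group ring `ℤ[Z_p^n]`, this functional kills `I^{w+1}`, where `I` is the
augmentation ideal.

Write `T_i` for the translation by `e_i`. The monomials `Δ^a = ∏ i, (T_i - 1)^{a_i}` with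
`0 ≤ a_i ≤ p - 1` form a `ℤ`-basis of the group ring (`monBasis`), so `u` is freely determined by
its Newton coefficients `λ_a`, the values of the functional at `Δ^a`. The functional kills
`I^{w+1}` iff `p^m λ_a = 0` for all `a ≠ 0` and all `m` with `m (p - 1) + |a| > w` (`vanish_iff`):

* `p I ⊆ I^p` gives `p^m Δ^a ∈ I^{m (p - 1) + |a|}`, so the condition is necessary;
* conversely `T_i^p = 1` expresses `(T_i - 1)^p` as a combination of `p (T_i - 1)^k`, `1 ≤ k < p`.
  Each such reduction lowers the weight by at most `p - 1` and gains a factor `p`, so every monomial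
  of weight greater than `w` reduces to multiples of terms `p^m Δ^a` as above.

Thus `λ_0 ∈ U(1)` is arbitrary, `λ_a` ranges over the `p^{m(w,a)}`-torsion of `U(1)`, which is
cyclic of that order, when `0 < |a| ≤ w`, and `λ_a` vanishes when `|a| > w`. A constant function has
`λ_0` as its only nonzero coefficient, so the `U(1)` factor is the group of global phases.
-/

open Matrix Complex

/-- Shift gate `X` acting on the `i`-th of `n` qudits: `X(e_i)|j⟩ = |j + e_i⟩`. -/
noncomputable def XmatN (p n : ℕ) [NeZero p] (i : Fin n) :
    Matrix (Fin n → ZMod p) (Fin n → ZMod p) ℂ :=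
  Matrix.of fun r c => if r = Function.update c i (c i + 1) then 1 else 0

/-- Phase gate `Z` acting on the `i`-th of `n` qudits: `Z(e_i)|j⟩ = ω^{j_i}|j⟩`. -/
noncomputable def ZmatN (p n : ℕ) [NeZero p] (i : Fin n) :
    Matrix (Fin n → ZMod p) (Fin n → ZMod p) ℂ :=
  Matrix.of fun r c =>
    if r = c then Complex.exp (2 * Real.pi * Complex.I * (((c i).val : ℂ) / (p : ℂ))) else 0

/-- The phase of the Pauli group generators: `i` if `p = 2`, `ω = exp(2πi/p)` if `p > 2`. -/
noncomputable def pauliPhase (p : ℕ) : ℂ :=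
  if p = 2 then Complex.I else Complex.exp (2 * Real.pi * Complex.I / (p : ℂ))

/-- The `n`-qudit Pauli group `P_n = P^{⊗n}`, generated by the phase `iI` (`p = 2`) or
`ωI` (`p > 2`) together with `X` and `Z` acting on each qudit.  All generators have
finite order, so the monoid they generate is already a group. -/
noncomputable def PauliN (p n : ℕ) [NeZero p] :
    Set (Matrix (Fin n → ZMod p) (Fin n → ZMod p) ℂ) :=
  ↑(Submonoid.closure
      ({pauliPhase p • (1 : Matrix (Fin n → ZMod p) (Fin n → ZMod p) ℂ)} ∪
        (Set.range (XmatN p n)) ∪ (Set.range (ZmatN p n))))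

/-- The Clifford hierarchy on `n` qudits:
`C^1 = {e^{iφ} P : P ∈ P_n}`, and `C^k = {U unitary | U P U† ∈ C^{k-1} ∀ P ∈ P_n}` for `k ≥ 2`. -/
noncomputable def CliffN (p n : ℕ) [NeZero p] :
    ℕ → Set (Matrix (Fin n → ZMod p) (Fin n → ZMod p) ℂ)
  | 0 => ∅
  | 1 => {U | ∃ φ : ℝ, ∃ P ∈ PauliN p n, U = Complex.exp (φ * Complex.I) • P}
  | (k + 2) => {U | U ∈ Matrix.unitaryGroup (Fin n → ZMod p) ℂ ∧
      ∀ P ∈ PauliN p n, U * P * Uᴴ ∈ CliffN p n (k + 1)}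

/-- The diagonal gates in the `k`-th level of the `n`-qudit Clifford hierarchy. -/
noncomputable def CliffDN (p n : ℕ) [NeZero p] (k : ℕ) :
    Set (Matrix (Fin n → ZMod p) (Fin n → ZMod p) ℂ) :=
  {U | U ∈ CliffN p n k ∧ U.IsDiag}


/-! ### The group ring and its augmentation ideal -/

/-- The integral group ring `ℤ[Z_p^n]`. Additive maps from it to an abelian group `A` are the same
as functions `Z_p^n → A`. -/
abbrev GrpRing (p n : ℕ) := AddMonoidAlgebra ℤ (Fin n → ZMod p)

/-- The group element of `ℤ[Z_p^n]` attached to `b`, which acts on functions as translation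
by `b`. -/
noncomputable def shiftEl {p n : ℕ} (b : Fin n → ZMod p) : GrpRing p n := AddMonoidAlgebra.single b 1

/-- The difference operator `T_i - 1` in the `i`-th coordinate direction. -/
noncomputable def del (p : ℕ) {n : ℕ} (i : Fin n) : GrpRing p n := shiftEl (Pi.single i 1) - 1

/-- The augmentation ideal, presented by the generators `T_i - 1`. -/
noncomputable def augI (p n : ℕ) : Ideal (GrpRing p n) := Ideal.span (Set.range (del p))

lemma shiftEl_add {p n : ℕ} (b c : Fin n → ZMod p) : shiftEl (b + c) = shiftEl b * shiftEl c := by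
  simp [shiftEl, AddMonoidAlgebra.single_mul_single]

lemma shiftEl_zero {p n : ℕ} : shiftEl (0 : Fin n → ZMod p) = 1 := rfl

lemma shiftEl_nsmul {p n : ℕ} (k : ℕ) (b : Fin n → ZMod p) : shiftEl (k • b) = shiftEl b ^ k := by
  induction k with
  | zero => simp [shiftEl_zero]
  | succ k ih => rw [succ_nsmul, shiftEl_add, ih, pow_succ]

lemma shiftEl_sum {p n : ℕ} {ι : Type*} (s : Finset ι) (b : ι → Fin n → ZMod p) :
    shiftEl (∑ i ∈ s, b i) = ∏ i ∈ s, shiftEl (b i) := by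
  classical
  induction s using Finset.induction_on with
  | empty => simp [shiftEl_zero]
  | insert i s hi ih => rw [Finset.sum_insert hi, Finset.prod_insert hi, shiftEl_add, ih]

lemma sum_val_nsmul_single {p n : ℕ} [NeZero p] (b : Fin n → ZMod p) :
    ∑ i, (b i).val • (Pi.single i 1 : Fin n → ZMod p) = b := by
  conv_rhs => rw [← Finset.univ_sum_single b]
  refine Finset.sum_congr rfl fun i _ => ?_
  rw [← Pi.single_smul]
  simp

lemma shiftEl_eq_prod {p n : ℕ} [NeZero p] (b : Fin n → ZMod p) :
    shiftEl b = ∏ i, (1 + del p i) ^ (b i).val := by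
  conv_lhs => rw [← sum_val_nsmul_single b, shiftEl_sum]
  refine Finset.prod_congr rfl fun i _ => ?_
  rw [shiftEl_nsmul, del]; ring

lemma span_shiftEl (p n : ℕ) : Submodule.span ℤ (Set.range (shiftEl : (Fin n → ZMod p) → GrpRing p n)) = ⊤ := by
  rw [← (AddMonoidAlgebra.basis (Fin n → ZMod p) ℤ).span_eq]
  congr 2

lemma del_mem {p n : ℕ} (i : Fin n) : del p i ∈ augI p n := Ideal.subset_span ⟨i, rfl⟩

lemma shiftEl_sub_one_mem {p n : ℕ} [NeZero p] (b : Fin n → ZMod p) : shiftEl b - 1 ∈ augI p n := by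
  have hmul : ∀ g h : GrpRing p n, g - 1 ∈ augI p n → h - 1 ∈ augI p n → g * h - 1 ∈ augI p n := by
    intro g h hg hh
    have : g * h - 1 = g * (h - 1) + (g - 1) := by ring
    rw [this]
    exact add_mem (Ideal.mul_mem_left _ _ hh) hg
  rw [shiftEl_eq_prod]
  refine Finset.prod_induction _ (fun g => g - 1 ∈ augI p n) hmul (by simp) fun i _ => ?_
  induction (b i).val with
  | zero => simp
  | succ k ih =>
    rw [pow_succ]
    exact hmul _ _ ih (by simpa using del_mem i)

lemma one_add_del_pow {p n : ℕ} (i : Fin n) : (1 + del p i) ^ p = 1 := by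
  have : 1 + del p i = shiftEl (Pi.single i 1) := by rw [del]; ring
  rw [this, ← shiftEl_nsmul, ← Pi.single_smul]
  simp [shiftEl_zero]

/-- The relation `T_i^p = 1`, expanded in powers of `T_i - 1`. -/
lemma del_pow_eq {p n : ℕ} (hp : p.Prime) (i : Fin n) :
    del p i ^ p = - ∑ k ∈ Finset.Ico 1 p, (p.choose k : GrpRing p n) * del p i ^ k := by
  have h := one_add_del_pow (p := p) i
  rw [add_comm, add_pow, Finset.sum_range_succ, Finset.range_eq_Ico,
    Finset.sum_eq_sum_Ico_succ_bot hp.pos] at h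
  simp only [one_pow, mul_one, pow_zero, Nat.choose_zero_right, Nat.cast_one, Nat.choose_self] at h
  have h2 : ∑ k ∈ Finset.Ico 1 p, (p.choose k : GrpRing p n) * del p i ^ k
     = ∑ k ∈ Finset.Ico (0+1) p, del p i ^ k * (p.choose k : GrpRing p n) := 
    Finset.sum_congr rfl fun k _ => mul_comm _ _
  rw [h2]
  linear_combination h

/-- `p I ⊆ I^p`. The relation `del_pow_eq` gives `p I ⊆ I^p + p I^2`, because its linear term is
`p (T_i - 1)` and its other coefficients are divisible by `p`; iterating yields
`p I ⊆ I^p + p I^{k+1}` for every `k`, and `k = p` suffices. -/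
lemma p_mul_augI_le {p n : ℕ} (hp : p.Prime) :
    Ideal.span {(p : GrpRing p n)} * augI p n ≤ augI p n ^ p := by
  have step : Ideal.span {(p : GrpRing p n)} * augI p n ≤
      augI p n ^ p ⊔ Ideal.span {(p : GrpRing p n)} * augI p n ^ 2 := by
    rw [augI, Ideal.span_mul_span', Ideal.span_le]
    rintro _ ⟨_, rfl, _, ⟨i, rfl⟩, rfl⟩
    rw [← augI]
    have h := del_pow_eq hp i
    rw [Finset.sum_eq_sum_Ico_succ_bot hp.one_lt] at h
    have h3 : (p : GrpRing p n) * del p i = - del p i ^ p -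
       ∑ k ∈ Finset.Ico 2 p, (p.choose k : GrpRing p n) * del p i ^ k := by
      rw [h]; simp
    simp only [SetLike.mem_coe]
    rw [h3]
    refine sub_mem (neg_mem (Ideal.mem_sup_left (Ideal.pow_mem_pow (del_mem i) p))) ?_
    refine Ideal.mem_sup_right (sum_mem fun k hk => ?_)
    rw [Finset.mem_Ico] at hk
    obtain ⟨c, hc⟩ := hp.dvd_choose_self (by omega) hk.2
    rw [hc, Nat.cast_mul, mul_assoc]
    refine Ideal.mul_mem_mul (Ideal.mem_span_singleton_self _) (Ideal.mul_mem_left _ _ ?_)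
    exact Ideal.pow_le_pow_right hk.1 (Ideal.pow_mem_pow (del_mem i) k)
  have iter : ∀ k, Ideal.span {(p : GrpRing p n)} * augI p n ≤
      augI p n ^ p ⊔ Ideal.span {(p : GrpRing p n)} * augI p n ^ (k + 1) := by
    intro k
    induction k with
    | zero => simp
    | succ k ih =>
      refine ih.trans (sup_le le_sup_left ?_)
      rw [pow_succ', ← mul_assoc]
      refine (Ideal.mul_mono_left step).trans ?_
      rw [Ideal.sup_mul]
      refine sup_le_sup Ideal.mul_le_left (le_of_eq ?_)
      rw [mul_assoc, ← pow_add]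
      congr 2; ring
  refine (iter p).trans (sup_le le_rfl ?_)
  exact Ideal.mul_le_right.trans (Ideal.pow_le_pow_right (Nat.le_succ p))

/-- Each factor `p` is worth `p - 1` powers of the augmentation ideal. -/
lemma p_pow_mul_mem {p n : ℕ} (hp : p.Prime) (m s : ℕ) (hs : 1 ≤ s) (g : GrpRing p n)
    (hg : g ∈ augI p n ^ s) : (p : GrpRing p n) ^ m * g ∈ augI p n ^ (m * (p - 1) + s) := by
  induction m with
  | zero => simpa using hg
  | succ m ih =>
    obtain ⟨t, ht⟩ : ∃ t, m * (p - 1) + s = t + 1 := ⟨m * (p - 1) + s - 1, by omega⟩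
    have hp1 := hp.one_lt
    have e : (m + 1) * (p - 1) + s = p + t := by
      rw [add_mul]; omega
    rw [e, pow_add, pow_succ', mul_assoc]
    rw [ht, pow_succ'] at ih
    refine Ideal.mul_mono_left (p_mul_augI_le hp) ?_
    rw [mul_assoc]
    exact Ideal.mul_mem_mul (Ideal.mem_span_singleton_self _) ih

/-! ### Monomials in the difference operators -/

/-- The monomial `Δ^a = ∏ i, (T_i - 1)^{a_i}`. -/
noncomputable def mon (p : ℕ) {n : ℕ} (a : Fin n → ℕ) : GrpRing p n := ∏ i, del p i ^ a i

lemma mon_mem {p n : ℕ} (a : Fin n → ℕ) : mon p a ∈ augI p n ^ (∑ i, a i) := by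
  rw [mon, ← Finset.prod_pow_eq_pow_sum]
  exact Ideal.prod_mem_prod fun i _ => Ideal.pow_mem_pow (del_mem i) _

lemma mon_add {p n : ℕ} (a b : Fin n → ℕ) : mon p (a + b) = mon p a * mon p b := by
  simp [mon, pow_add, Finset.prod_mul_distrib]

lemma mon_single {p n : ℕ} (i : Fin n) (k : ℕ) : mon p (Pi.single i k) = del p i ^ k := by
  rw [mon, Finset.prod_eq_single i]
  · simp
  · intro j _ hj; simp [hj]
  · simp

/-- The evaluation `ℤ[X_1, …, X_n] → ℤ[Z_p^n]`, `X_i ↦ T_i - 1`. -/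
noncomputable def ev (p n : ℕ) : MvPolynomial (Fin n) ℤ →ₐ[ℤ] GrpRing p n :=
  MvPolynomial.aeval (del p)

lemma ev_monomial {p n : ℕ} (b : Fin n →₀ ℕ) (c : ℤ) :
    ev p n (MvPolynomial.monomial b c) = c • mon p b := by
  rw [ev, MvPolynomial.aeval_monomial, mon, Finsupp.prod_fintype _ _ (by simp)]
  rw [Algebra.smul_def]

lemma ev_surjective {p n : ℕ} [NeZero p] : Function.Surjective (ev p n) := by
  have h : (ev p n).toLinearMap.range = ⊤ := by
    rw [eq_top_iff, ← span_shiftEl, Submodule.span_le]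
    rintro _ ⟨b, rfl⟩
    refine ⟨∏ i, (1 + MvPolynomial.X i) ^ (b i).val, ?_⟩
    rw [shiftEl_eq_prod]
    simp [ev]
  exact LinearMap.range_eq_top.1 h

/-- Elements of `I^k` are integer combinations of monomials of weight at least `k`: the ideal
`I^k` is the image of the `k`-th power of `(X_1, …, X_n)` under the surjection `ev`. -/
lemma exists_of_mem_augI_pow {p n : ℕ} [NeZero p] (k : ℕ) (g : GrpRing p n)
    (hg : g ∈ augI p n ^ k) :
    ∃ f : MvPolynomial (Fin n) ℤ, ev p n f = g ∧ ∀ b ∈ f.support, k ≤ ∑ i, b i := by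
  have : augI p n ^ k = (MvPolynomial.idealOfVars (Fin n) ℤ ^ k).map (ev p n) := by
    rw [Ideal.map_pow, Ideal.map_span, augI, ← Set.range_comp]
    congr 3
    ext i; simp [ev]
  rw [this, Ideal.mem_map_iff_of_surjective _ ev_surjective] at hg
  obtain ⟨f, hf, rfl⟩ := hg
  refine ⟨f, rfl, fun b hb => ?_⟩
  have := (MvPolynomial.mem_pow_idealOfVars_iff _ _).1 hf b hb
  rwa [Finsupp.degree_eq_sum] at this

/-- An additive functional `L` kills `I^{w+1}` iff `p^m L(Δ^a) = 0` for all nonzero `a` in the box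
`{0, …, p - 1}^n` and all `m` with `w < m (p - 1) + |a|`. Necessity is `p I ⊆ I^p`. For sufficiency,
the condition extends to all nonzero exponents `b` by induction on `|b|`: a factor `(T_i - 1)^p` is
replaced by multiples of `p (T_i - 1)^k` with `1 ≤ k < p`, which trades at most `p - 1` of the weight
for a factor `p`. The case `m = 0` then covers the monomials spanning `I^{w+1}`. -/
lemma vanish_iff {p n : ℕ} [NeZero p] (hp : p.Prime) {A : Type*} [AddCommGroup A] (w : ℕ)
    (L : GrpRing p n →ₗ[ℤ] A) :
    (∀ g ∈ augI p n ^ (w + 1), L g = 0) ↔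
    ∀ a : Fin n → ℕ, a ≠ 0 → (∀ i, a i ≤ p - 1) → ∀ m, w < m * (p - 1) + ∑ i, a i →
      p ^ m • L (mon p a) = 0 := by
  have hp1 := hp.one_lt
  constructor
  · intro h a ha0 _ m hm
    have h1 : 1 ≤ ∑ i, a i := by
      by_contra hc
      apply ha0
      ext i
      have := Finset.single_le_sum (f := a) (fun _ _ => Nat.zero_le _) (Finset.mem_univ i)
      simp; omega
    have := h _ (Ideal.pow_le_pow_right hm (p_pow_mul_mem hp m _ h1 _ (mon_mem a)))
    rw [← this, ← map_nsmul, nsmul_eq_mul, Nat.cast_pow]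
  · intro h
    have key : ∀ s, ∀ b : Fin n → ℕ, ∑ i, b i = s → b ≠ 0 → ∀ m, w < m * (p - 1) + ∑ i, b i →
        p ^ m • L (mon p b) = 0 := by
      intro s
      induction s using Nat.strong_induction_on with
      | _ s ih =>
        intro b hs hb m hm
        by_cases hbox : ∀ i, b i ≤ p - 1
        · exact h b hb hbox m hm
        push Not at hbox
        obtain ⟨i, hi⟩ := hbox
        obtain ⟨c, rfl⟩ : ∃ c : Fin n → ℕ, b = c + Pi.single i p := by
          refine ⟨b - Pi.single i p, (tsub_add_cancel_of_le ?_).symm⟩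
          intro j
          rcases eq_or_ne j i with rfl | hj
          · simp; omega
          · simp [hj]
        simp only [Pi.add_apply, Finset.sum_add_distrib, Finset.sum_pi_single', Finset.mem_univ,
          if_true] at hs hm
        rw [mon_add, mon_single, del_pow_eq hp, mul_neg, map_neg, smul_neg, Finset.mul_sum,
          map_sum, Finset.smul_sum, neg_eq_zero]
        refine Finset.sum_eq_zero fun k hk => ?_
        rw [Finset.mem_Ico] at hk
        obtain ⟨q, hq⟩ := hp.dvd_choose_self (by omega) hk.2
        have e : mon p c * ((p.choose k : GrpRing p n) * del p i ^ k)
            = (p * q) • mon p (c + Pi.single i k) := by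
          rw [mon_add, mon_single, hq, nsmul_eq_mul]; ring
        have := ih (∑ j, (c + Pi.single i k : Fin n → ℕ) j) (by
          simp [Finset.sum_add_distrib]; omega) (c + Pi.single i k) rfl (by
          intro h0
          have := congrFun h0 i
          simp at this; omega) (m + 1) (by
          simp [Finset.sum_add_distrib, add_mul]; omega)
        rw [e, map_nsmul, ← mul_smul, ← mul_assoc, ← pow_succ, mul_comm, mul_smul, this, smul_zero]
    intro g hg
    obtain ⟨f, rfl, hf⟩ := exists_of_mem_augI_pow _ g hg
    rw [f.as_sum, map_sum, map_sum]
    refine Finset.sum_eq_zero fun b hb => ?_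
    rw [ev_monomial, map_zsmul]
    have := hf b hb
    have := key _ b rfl (by rintro h0; simp [h0] at this) 0 (by omega)
    rw [pow_zero, one_smul] at this
    rw [this, smul_zero]

/-- The box monomials span: `T^b = ∏ i, (1 + (T_i - 1))^{b_i}` with `b_i < p`, expanded
binomially. -/
lemma mon_box_span {p n : ℕ} [NeZero p] :
    ⊤ ≤ Submodule.span ℤ (Set.range fun x : Fin n → ZMod p => mon p (fun i => (x i).val)) := by
  rw [← span_shiftEl, Submodule.span_le]
  rintro _ ⟨b, rfl⟩
  have e : ∀ i, (1 + del p i) ^ (b i).val =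
      ∑ k ∈ Finset.range p, (((b i).val.choose k : ℕ) : GrpRing p n) * del p i ^ k := by
    intro i
    rw [add_comm, add_pow]
    refine Finset.sum_subset_zero_on_sdiff ?_ ?_ ?_
    · exact Finset.range_subset_range.2 (ZMod.val_lt _)
    · intro k hk
      simp only [Finset.mem_sdiff, Finset.mem_range] at hk
      rw [Nat.choose_eq_zero_of_lt (by omega)]; simp
    · intro k _; simp [mul_comm]
  rw [shiftEl_eq_prod, Finset.prod_congr rfl fun i _ => e i, Finset.prod_univ_sum]
  refine sum_mem fun a ha => ?_
  have : ∏ i, (((b i).val.choose (a i) : ℕ) : GrpRing p n) * del p i ^ a i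
      = (∏ i, (b i).val.choose (a i)) • mon p a := by
    rw [Finset.prod_mul_distrib, nsmul_eq_mul, mon]; simp
  rw [this]
  refine nsmul_mem (Submodule.subset_span (Set.mem_range.2 ⟨fun i => (a i : ZMod p), ?_⟩)) _
  simp only [Fintype.mem_piFinset, Finset.mem_range] at ha
  simp only
  congr 1
  ext i
  exact ZMod.val_cast_of_lt (ha i)

/-- The box monomials `Δ^x`, `0 ≤ x_i ≤ p - 1`, as a `ℤ`-basis of the group ring: a spanning family
of cardinality equal to the rank is a basis. -/
noncomputable def monBasis (p n : ℕ) [NeZero p] : Module.Basis (Fin n → ZMod p) ℤ (GrpRing p n) :=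
  basisOfTopLeSpanOfCardEqFinrank (fun x => mon p (fun i => (x i).val)) mon_box_span
    (Module.finrank_eq_card_basis (AddMonoidAlgebra.basis (Fin n → ZMod p) ℤ)).symm

lemma monBasis_apply {p n : ℕ} [NeZero p] (x : Fin n → ZMod p) :
    monBasis p n x = mon p (fun i => (x i).val) := by
  simp [monBasis]

/-! ### Non-classical polynomials -/

/-- The `ℤ`-linear extension of a function `Z_p^n → A` to the group ring. -/
noncomputable def pairing (p n : ℕ) (A : Type*) [AddCommGroup A] :
    ((Fin n → ZMod p) → A) ≃+ (GrpRing p n →ₗ[ℤ] A) :=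
  ((AddMonoidAlgebra.basis (Fin n → ZMod p) ℤ).constr ℤ).toAddEquiv

lemma pairing_shiftEl {p n : ℕ} {A : Type*} [AddCommGroup A] (P : (Fin n → ZMod p) → A)
    (b : Fin n → ZMod p) :
    pairing p n A P (shiftEl b) = P b := by
  have : shiftEl b = AddMonoidAlgebra.basis (Fin n → ZMod p) ℤ b := rfl
  rw [this]
  exact Module.Basis.constr_basis (AddMonoidAlgebra.basis (Fin n → ZMod p) ℤ) ℤ P b

/-- The non-classical polynomials of degree less than `k`: functions whose linear extension kills
`I^k`. By `polyLT_succ` these are the functions with vanishing `k`-fold differences. -/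
def polyLT (p n : ℕ) (A : Type*) [AddCommGroup A] (k : ℕ) : AddSubgroup ((Fin n → ZMod p) → A) where
  carrier := {P | ∀ g ∈ augI p n ^ k, pairing p n A P g = 0}
  zero_mem' := by intro g _; simp
  add_mem' := by intro P Q hP hQ g hg; simp [hP g hg, hQ g hg]
  neg_mem' := by intro P hP g hg; simp [hP g hg]

lemma polyLT_zero {p n : ℕ} {A : Type*} [AddCommGroup A] (P : (Fin n → ZMod p) → A) :
    P ∈ polyLT p n A 0 ↔ P = 0 := by
  constructor
  · intro h
    ext b
    rw [← pairing_shiftEl P b]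
    exact h _ (by simp)
  · rintro rfl; exact zero_mem _

lemma pairing_shift {p n : ℕ} {A : Type*} [AddCommGroup A] (P : (Fin n → ZMod p) → A)
    (b : Fin n → ZMod p)
    (g : GrpRing p n) :
    pairing p n A (fun x => P (x + b)) g = pairing p n A P (shiftEl b * g) := by
  have : pairing p n A (fun x => P (x + b)) = (pairing p n A P) ∘ₗ LinearMap.mulLeft ℤ (shiftEl b) := by
    refine (AddMonoidAlgebra.basis (Fin n → ZMod p) ℤ).ext fun x => ?_
    change pairing p n A (fun x => P (x + b)) (shiftEl x) = pairing p n A P (shiftEl b * shiftEl x)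
    rw [← shiftEl_add, pairing_shiftEl, pairing_shiftEl, add_comm]
  rw [this]; rfl

lemma polyLT_shift {p n : ℕ} {A : Type*} [AddCommGroup A] {P : (Fin n → ZMod p) → A} {k : ℕ}
    (hP : P ∈ polyLT p n A k) (b) : (fun x => P (x + b)) ∈ polyLT p n A k := by
  intro g hg
  rw [pairing_shift]
  exact hP _ (Ideal.mul_mem_left _ _ hg)

/-- The degree drops by one under every difference operator, and this characterises the degree. -/
lemma polyLT_succ {p n : ℕ} [NeZero p] {A : Type*} [AddCommGroup A]
    (P : (Fin n → ZMod p) → A) (k : ℕ) :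
    P ∈ polyLT p n A (k + 1) ↔ ∀ b, (fun x => P (x + b) - P x) ∈ polyLT p n A k := by
  have e : ∀ b g, pairing p n A (fun x => P (x + b) - P x) g =
      pairing p n A P ((shiftEl b - 1) * g) := by
    intro b g
    have : (fun x => P (x + b) - P x) = (fun x => P (x + b)) - P := rfl
    rw [this, map_sub, LinearMap.sub_apply, pairing_shift, sub_mul, map_sub, one_mul]
  constructor
  · intro h b g hg
    rw [e]
    apply h
    rw [pow_succ']
    exact Ideal.mul_mem_mul (shiftEl_sub_one_mem b) hg
  · intro h g hg
    rw [pow_succ'] at hg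
    refine Submodule.mul_induction_on hg (fun m hm g hg => ?_) fun x y hx hy => by
      rw [map_add, hx, hy, add_zero]
    induction hm using Submodule.span_induction generalizing g with
    | mem x hx =>
      obtain ⟨i, rfl⟩ := hx
      rw [del, ← e]
      exact h _ g hg
    | zero => simp
    | add x y _ _ hx hy => rw [add_mul, map_add, hx g hg, hy g hg, add_zero]
    | smul r x _ hx =>
      rw [smul_eq_mul, mul_comm r, mul_assoc]
      exact hx _ (Ideal.mul_mem_left _ _ hg)

lemma mem_polyLT_one {p n : ℕ} [NeZero p] {A : Type*} [AddCommGroup A]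
    (P : (Fin n → ZMod p) → A) : P ∈ polyLT p n A 1 ↔ ∀ x, P x = P 0 := by
  rw [show 1 = 0 + 1 from rfl, polyLT_succ]
  simp only [polyLT_zero, funext_iff, Pi.zero_apply, sub_eq_zero]
  exact ⟨fun h x => by simpa using h x 0, fun h b x => by rw [h, h x]⟩

/-- The Newton coefficients of a function: `x ↦ λ_x`, the value of the linear extension at the box
monomial `Δ^x`. A function is freely determined by its coefficients since the `Δ^x` form a
basis. -/
noncomputable def coeffEquiv (p n : ℕ) [NeZero p] (A : Type*) [AddCommGroup A] :
    ((Fin n → ZMod p) → A) ≃+ ((Fin n → ZMod p) → A) :=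
  (pairing p n A).trans ((monBasis p n).constr ℤ).toAddEquiv.symm

lemma coeffEquiv_apply {p n : ℕ} [NeZero p] {A : Type*} [AddCommGroup A]
    (P : (Fin n → ZMod p) → A) (x) :
    coeffEquiv p n A P x = pairing p n A P (mon p (fun i => (x i).val)) := by
  rw [← monBasis_apply]; rfl

/-- `vanish_iff` in terms of Newton coefficients, with the box `{0, …, p - 1}^n` indexed by
`Z_p^n`. -/
lemma mem_polyLT_succ_iff_coeff {p n : ℕ} [NeZero p] (hp : p.Prime) {A : Type*} [AddCommGroup A]
    (w : ℕ) (P : (Fin n → ZMod p) → A) :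
    P ∈ polyLT p n A (w + 1) ↔ ∀ x : Fin n → ZMod p, x ≠ 0 → ∀ m,
      w < m * (p - 1) + ∑ i, (x i).val → p ^ m • coeffEquiv p n A P x = 0 := by
  have hp1 := hp.one_lt
  refine (vanish_iff hp w (pairing p n A P)).trans ⟨fun h x hx m hm => ?_, fun h a ha hbox m hm => ?_⟩
  · rw [coeffEquiv_apply]
    refine h _ (fun h0 => hx ?_) (fun i => ?_) m hm
    · ext i
      exact (ZMod.val_eq_zero _).1 (congrFun h0 i)
    · have := ZMod.val_lt (x i)
      omega
  · have e : (fun i => ((a i : ZMod p)).val) = a := by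
      ext i
      exact ZMod.val_cast_of_lt (by have := hbox i; omega)
    have := h (fun i => (a i : ZMod p)) (fun h0 => ha ?_) m (by rw [congrArg (fun f => ∑ i, f i) e]; exact hm)
    · rwa [coeffEquiv_apply, e] at this
    · rw [← e]
      ext i
      have : (a i : ZMod p) = 0 := congrFun h0 i
      rw [this]; simp

/-! ### Monomial matrices and the Pauli group -/

/-- The monomial matrix `diag(v) X^b`, where `X^b |c⟩ = |c + b⟩` and the phases `v` are written
additively; the row index is the argument of `v`. -/
noncomputable def monoMat {p n : ℕ} (b : Fin n → ZMod p) (v : (Fin n → ZMod p) → Additive Circle) :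
    Matrix (Fin n → ZMod p) (Fin n → ZMod p) ℂ :=
  Matrix.of fun r c => if r = c + b then ((v r).toMul : ℂ) else 0

section
variable {p n : ℕ} [NeZero p]

lemma monoMat_mul (b b' : Fin n → ZMod p) (v v' : (Fin n → ZMod p) → Additive Circle) :
    monoMat b v * monoMat b' v' = monoMat (b + b') (fun r => v r + v' (r - b)) := by
  ext r c
  rw [Matrix.mul_apply, Finset.sum_eq_single (r - b)]
  · have e : r - b = c + b' ↔ r = c + (b + b') := by
      rw [sub_eq_iff_eq_add, add_assoc, add_comm b' b]
    simp [monoMat, e]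
  · intro k _ hk
    have : ¬ r = k + b := fun h => hk (by rw [h, add_sub_cancel_right])
    simp [monoMat, this]
  · simp

lemma monoMat_zero : monoMat (0 : Fin n → ZMod p) 0 = 1 := by
  ext r c
  simp [monoMat, Matrix.one_apply]

lemma monoMat_star (b : Fin n → ZMod p) (v : (Fin n → ZMod p) → Additive Circle) :
    (monoMat b v)ᴴ = monoMat (-b) (fun r => - v (r + b)) := by
  ext r c
  have e : r = c + -b ↔ c = r + b := by
    rw [← sub_eq_add_neg, eq_sub_iff_add_eq, eq_comm]
  rw [Matrix.conjTranspose_apply]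
  simp only [monoMat, Matrix.of_apply, e]
  by_cases h : c = r + b
  · simp [h, ← Circle.coe_inv_eq_conj]
  · simp [h]

lemma monoMat_mul_star (b : Fin n → ZMod p) (v : (Fin n → ZMod p) → Additive Circle) :
    monoMat b v * (monoMat b v)ᴴ = 1 := by
  rw [monoMat_star, monoMat_mul, ← monoMat_zero, add_neg_cancel]
  congr 1
  ext r; simp

lemma monoMat_star_mul (b : Fin n → ZMod p) (v : (Fin n → ZMod p) → Additive Circle) :
    (monoMat b v)ᴴ * monoMat b v = 1 := mul_eq_one_comm.1 (monoMat_mul_star b v)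

lemma monoMat_inj {b b' : Fin n → ZMod p} {v v' : (Fin n → ZMod p) → Additive Circle}
    (h : monoMat b v = monoMat b' v') : b = b' ∧ v = v' := by
  have hb : b = b' := by
    by_contra hne
    have := congrFun (congrFun h b) 0
    simp [monoMat, hne] at this
  subst hb
  refine ⟨rfl, funext fun r => ?_⟩
  have := congrFun (congrFun h r) (r - b)
  simp only [monoMat, Matrix.of_apply, sub_add_cancel, if_true] at this
  exact Additive.toMul.injective (Circle.ext this)

lemma smul_monoMat (z : Circle) (b : Fin n → ZMod p) (v : (Fin n → ZMod p) → Additive Circle) :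
    (z : ℂ) • monoMat b v = monoMat b (fun r => Additive.ofMul z + v r) := by
  ext r c
  simp [monoMat]

lemma monoMat_shift_pow (b : Fin n → ZMod p) (k : ℕ) : monoMat b 0 ^ k = monoMat (k • b) 0 := by
  induction k with
  | zero => simp [monoMat_zero]
  | succ k ih =>
    rw [pow_succ, ih, monoMat_mul, succ_nsmul]
    congr 1
    ext; simp

lemma monoMat_diag_mul (v v' : (Fin n → ZMod p) → Additive Circle) :
    monoMat 0 v * monoMat 0 v' = monoMat 0 (v + v') := by
  rw [monoMat_mul, add_zero]
  congr 1
  ext; simp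

lemma monoMat_diag_pow (v : (Fin n → ZMod p) → Additive Circle) (k : ℕ) :
    monoMat 0 v ^ k = monoMat 0 (k • v) := by
  induction k with
  | zero => simp [monoMat_zero]
  | succ k ih => rw [pow_succ, ih, monoMat_diag_mul, succ_nsmul]

lemma XmatN_eq (i : Fin n) : XmatN p n i = monoMat (Pi.single i 1) 0 := by
  ext r c
  have : Function.update c i (c i + 1) = c + Pi.single i 1 := by
    ext j
    rcases eq_or_ne j i with rfl | hj
    · simp
    · simp [hj]
  simp [XmatN, monoMat, this]

/-- The phase function `x ↦ ω^{x_i}` of the gate `Z` on the `i`-th qudit. -/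
noncomputable def coordPhase (i : Fin n) : (Fin n → ZMod p) → Additive Circle :=
  fun x => Additive.ofMul (ZMod.toCircle (x i))

lemma ZmatN_eq (i : Fin n) : ZmatN p n i = monoMat 0 (coordPhase i) := by
  ext r c
  simp only [ZmatN, monoMat, coordPhase, Matrix.of_apply, add_zero, toMul_ofMul, ZMod.toCircle_apply]
  split_ifs with h
  · rw [h]; congr 1; ring
  · rfl

lemma coordPhase_mem (i : Fin n) : coordPhase i ∈ polyLT p n (Additive Circle) 2 := by
  rw [polyLT_succ]
  intro b
  rw [mem_polyLT_one]
  intro x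
  simp [coordPhase, AddChar.map_add_eq_mul]

/-- The exponent `4 p` serves both generators, `i` of order `4` and `ω` of order `p`. -/
lemma exists_pauliPhase (hp : p ≠ 0) : ∃ z : Circle, (z : ℂ) = pauliPhase p ∧ z ^ (4 * p) = 1 := by
  have h : pauliPhase p ^ (4 * p) = 1 := by
    rw [pauliPhase]
    split_ifs with h2
    · rw [pow_mul, Complex.I_pow_four, one_pow]
    · rw [mul_comm 4 p, pow_mul, ← Complex.exp_nat_mul]
      have : (p : ℂ) ≠ 0 := Nat.cast_ne_zero.2 hp
      rw [mul_div_cancel₀ _ this, Complex.exp_two_pi_mul_I, one_pow]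
  have hn := norm_eq_one_of_pow_eq_one h (by omega)
  obtain ⟨z, hz⟩ : ∃ z : Circle, (z : ℂ) = pauliPhase p :=
    ⟨⟨pauliPhase p, mem_sphere_zero_iff_norm.2 hn⟩, rfl⟩
  refine ⟨z, hz, Circle.ext ?_⟩
  rw [Circle.coe_pow, Circle.coe_one, hz]
  exact h

lemma phase_eq (z : Circle) :
    (z : ℂ) • (1 : Matrix (Fin n → ZMod p) (Fin n → ZMod p) ℂ)
      = monoMat 0 (fun _ => Additive.ofMul z) := by
  rw [← monoMat_zero, smul_monoMat]; simp

lemma const_mem (c : Additive Circle) : (fun _ => c) ∈ polyLT p n (Additive Circle) 1 := by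
  rw [mem_polyLT_one]; simp

lemma polyLT_mono {A : Type*} [AddCommGroup A] {k l : ℕ} (h : k ≤ l) :
    polyLT p n A k ≤ polyLT p n A l := fun _ hP g hg => hP g (Ideal.pow_le_pow_right h hg)

/-- Every Pauli is a monomial matrix whose phase function is affine. -/
lemma pauli_form {P : Matrix (Fin n → ZMod p) (Fin n → ZMod p) ℂ} (hP : P ∈ PauliN p n) :
    ∃ b v, v ∈ polyLT p n (Additive Circle) 2 ∧ P = monoMat b v := by
  induction hP using Submonoid.closure_induction with
  | mem x hx =>
    rcases hx with (hx | ⟨i, rfl⟩) | ⟨i, rfl⟩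
    · rw [Set.mem_singleton_iff] at hx
      obtain ⟨z, hz, -⟩ := exists_pauliPhase (p := p) (NeZero.ne p)
      exact ⟨0, _, polyLT_mono (by omega) (const_mem _), by rw [hx, ← hz, phase_eq]⟩
    · exact ⟨_, 0, zero_mem _, XmatN_eq i⟩
    · exact ⟨0, _, coordPhase_mem i, ZmatN_eq i⟩
  | one => exact ⟨0, 0, zero_mem _, monoMat_zero.symm⟩
  | mul x y _ _ hx hy =>
    obtain ⟨b, v, hv, rfl⟩ := hx
    obtain ⟨b', v', hv', rfl⟩ := hy
    refine ⟨_, _, ?_, monoMat_mul _ _ _ _⟩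
    have := polyLT_shift hv' (-b)
    simp only [← sub_eq_add_neg] at this
    exact add_mem hv this

lemma X_mem (i : Fin n) : XmatN p n i ∈ PauliN p n :=
  Submonoid.subset_closure (Or.inl (Or.inr ⟨i, rfl⟩))

lemma Z_mem (i : Fin n) : ZmatN p n i ∈ PauliN p n :=
  Submonoid.subset_closure (Or.inr ⟨i, rfl⟩)

lemma pauli_mul {P Q : Matrix (Fin n → ZMod p) (Fin n → ZMod p) ℂ} (hP : P ∈ PauliN p n)
    (hQ : Q ∈ PauliN p n) : P * Q ∈ PauliN p n := Submonoid.mul_mem _ hP hQ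

lemma pauli_one : (1 : Matrix (Fin n → ZMod p) (Fin n → ZMod p) ℂ) ∈ PauliN p n :=
  Submonoid.one_mem _

lemma pauli_pow {P : Matrix (Fin n → ZMod p) (Fin n → ZMod p) ℂ} (hP : P ∈ PauliN p n) (k : ℕ) :
    P ^ k ∈ PauliN p n := Submonoid.pow_mem _ hP k

/-- The Pauli group is defined as a monoid; the inverse of an element of finite order is a power
of it. -/
lemma star_mem_of_pow {U : Matrix (Fin n → ZMod p) (Fin n → ZMod p) ℂ} (hU : U ∈ PauliN p n)
    {N : ℕ} (hN : N ≠ 0) (h : U ^ N = 1) : Uᴴ ∈ PauliN p n := by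
  have hu : U * Uᴴ = 1 := by
    obtain ⟨b, v, -, rfl⟩ := pauli_form hU
    exact monoMat_mul_star b v
  obtain ⟨m, rfl⟩ := Nat.exists_eq_succ_of_ne_zero hN
  have : Uᴴ = U ^ m := by
    calc Uᴴ = U ^ (m + 1) * Uᴴ := by rw [h, one_mul]
      _ = U ^ m := by rw [pow_succ, mul_assoc, hu, mul_one]
  rw [this]
  exact pauli_pow hU m

/-- The Pauli monoid is closed under adjoints, that is, inverses: its generators have finite
order. -/
lemma pauli_star {P : Matrix (Fin n → ZMod p) (Fin n → ZMod p) ℂ} (hP : P ∈ PauliN p n) :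
    Pᴴ ∈ PauliN p n := by
  have hp0 : p ≠ 0 := NeZero.ne p
  induction hP using Submonoid.closure_induction with
  | mem x hx =>
    have hx' : x ∈ PauliN p n := Submonoid.subset_closure hx
    rcases hx with (hx | ⟨i, rfl⟩) | ⟨i, rfl⟩
    · rw [Set.mem_singleton_iff] at hx
      obtain ⟨z, hz, hz4⟩ := exists_pauliPhase (p := p) (NeZero.ne p)
      refine star_mem_of_pow hx' (N := 4 * p) (by omega) ?_
      rw [hx, smul_pow, one_pow, ← hz, ← Circle.coe_pow, hz4]; simp
    · refine star_mem_of_pow hx' (N := p) hp0 ?_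
      rw [XmatN_eq, monoMat_shift_pow, ← monoMat_zero, ← Pi.single_smul]
      simp
    · refine star_mem_of_pow hx' (N := p) hp0 ?_
      rw [ZmatN_eq, monoMat_diag_pow, ← monoMat_zero]
      congr 1
      ext x
      simp [coordPhase, ← ofMul_pow, ← AddChar.map_nsmul_eq_pow]
  | one => simpa using pauli_one
  | mul x y _ _ hx hy =>
    rw [Matrix.conjTranspose_mul]
    exact pauli_mul hy hx

/-- Every shift `X^b` is a Pauli. -/
lemma shift_mem (b : Fin n → ZMod p) : monoMat b 0 ∈ PauliN p n := by
  rw [← sum_val_nsmul_single b]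
  refine Finset.sum_induction _ (fun b => monoMat b 0 ∈ PauliN p n) (fun b c hb hc => ?_) ?_
    fun i _ => ?_
  · have := pauli_mul hb hc
    rw [monoMat_mul] at this
    convert this using 2
    ext; simp
  · rw [monoMat_zero]; exact pauli_one
  · rw [← monoMat_shift_pow, ← XmatN_eq]
    exact pauli_pow (X_mem i) _

/-- Every `N`-th root of unity in the circle is `exp(2πi j / N)` for some `j ∈ Z_N`. -/
lemma exists_toCircle {N : ℕ} [NeZero N] {z : Circle} (hz : z ^ N = 1) :
    ∃ j : ZMod N, ZMod.toCircle j = z := by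
  have h : (z : ℂ) ^ N = 1 := by rw [← Circle.coe_pow, hz, Circle.coe_one]
  obtain ⟨i, -, hi⟩ := (Complex.isPrimitiveRoot_exp N (NeZero.ne N)).eq_pow_of_pow_eq_one h
  refine ⟨(i : ZMod N), ?_⟩
  ext
  rw [ZMod.toCircle_natCast, ← hi, ← Complex.exp_nat_mul]
  congr 1; ring

/-- A polynomial phase of degree at most `1` is a constant plus a combination of coordinate phases:
`u - u 0` is a homomorphism, and its values at the `e_i` are `p`-th roots of unity. -/
lemma affine_eq {u : (Fin n → ZMod p) → Additive Circle}
    (hu : u ∈ polyLT p n (Additive Circle) 2) :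
    ∃ c : Fin n → ℕ, u = fun x => u 0 + (∑ i, c i • coordPhase i) x := by
  rw [polyLT_succ] at hu
  simp only [mem_polyLT_one, zero_add] at hu
  let v : (Fin n → ZMod p) →+ Additive Circle :=
    { toFun := fun x => u x - u 0
      map_zero' := sub_self _
      map_add' := fun x b => by
        have := hu b x
        rw [sub_eq_iff_eq_add] at this
        rw [this]; abel }
  have hroot : ∀ i : Fin n, ∃ j : ZMod p, ZMod.toCircle j = (v (Pi.single i 1)).toMul := fun i => by
    apply exists_toCircle
    rw [← toMul_nsmul, ← map_nsmul, ← Pi.single_smul]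
    simp
  choose j hj using hroot
  refine ⟨fun i => (j i).val, funext fun x => ?_⟩
  have hx : v x = ∑ i, (j i).val • coordPhase i x := by
    conv_lhs => rw [← sum_val_nsmul_single x, map_sum]
    refine Finset.sum_congr rfl fun i _ => ?_
    rw [map_nsmul]
    have : v (Pi.single i 1) = Additive.ofMul (ZMod.toCircle (j i)) := by rw [hj]; rfl
    rw [this, coordPhase, ← ofMul_pow, ← ofMul_pow, ← AddChar.map_nsmul_eq_pow,
      ← AddChar.map_nsmul_eq_pow]
    simp [mul_comm]
  have hx' : u x = u 0 + v x := by simp [v]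
  rw [hx', hx]
  simp

/-- A diagonal gate is a Pauli up to a global phase iff its phase function has degree at most
`1`. -/
lemma monoMat_mem_one_iff (u : (Fin n → ZMod p) → Additive Circle) :
    monoMat 0 u ∈ CliffN p n 1 ↔ u ∈ polyLT p n (Additive Circle) 2 := by
  constructor
  · rintro ⟨φ, P, hP, h⟩
    obtain ⟨b, v, hv, rfl⟩ := pauli_form hP
    rw [← Circle.coe_exp, smul_monoMat] at h
    obtain ⟨-, rfl⟩ := monoMat_inj h
    exact add_mem (polyLT_mono (by omega) (const_mem _)) hv
  · intro hu
    obtain ⟨c, hc⟩ := affine_eq hu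
    obtain ⟨φ, hφ⟩ := Circle.exp_surjective (u 0).toMul
    refine ⟨φ, monoMat 0 (∑ i, c i • coordPhase i), ?_, ?_⟩
    · refine Finset.sum_induction _ (fun v => monoMat 0 v ∈ PauliN p n) (fun v v' hv hv' => ?_) ?_
        fun i _ => ?_
      · rw [← monoMat_diag_mul]; exact pauli_mul hv hv'
      · rw [monoMat_zero]; exact pauli_one
      · rw [← monoMat_diag_pow, ← ZmatN_eq]
        exact pauli_pow (Z_mem i) _
    · rw [← Circle.coe_exp, smul_monoMat, hφ]
      conv_lhs => rw [hc]
      rfl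

/-! ### The hierarchy in terms of finite differences -/

/-- Each level is stable under right multiplication by Paulis, since conjugation by a Pauli permutes
the Paulis. -/
lemma cliff_mul_pauli {k : ℕ} {U Q : Matrix (Fin n → ZMod p) (Fin n → ZMod p) ℂ}
    (hU : U ∈ CliffN p n (k + 1)) (hQ : Q ∈ PauliN p n) : U * Q ∈ CliffN p n (k + 1) := by
  cases k with
  | zero =>
    obtain ⟨φ, P, hP, rfl⟩ := hU
    exact ⟨φ, P * Q, pauli_mul hP hQ, by rw [smul_mul_assoc]⟩
  | succ k =>
    refine ⟨mul_mem hU.1 ?_, fun P hP => ?_⟩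
    · obtain ⟨b, v, -, rfl⟩ := pauli_form hQ
      exact Matrix.mem_unitaryGroup_iff.2 (monoMat_mul_star b v)
    · have := hU.2 _ (pauli_mul (pauli_mul hQ hP) (pauli_star hQ))
      rw [Matrix.conjTranspose_mul]
      simpa only [mul_assoc] using this

lemma cliff_mul_pauli_iff {k : ℕ} {U Q : Matrix (Fin n → ZMod p) (Fin n → ZMod p) ℂ}
    (hQ : Q ∈ PauliN p n) : U * Q ∈ CliffN p n (k + 1) ↔ U ∈ CliffN p n (k + 1) := by
  refine ⟨fun h => ?_, fun h => cliff_mul_pauli h hQ⟩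
  have := cliff_mul_pauli h (pauli_star hQ)
  obtain ⟨b, v, -, rfl⟩ := pauli_form hQ
  rwa [mul_assoc, monoMat_mul_star, mul_one] at this

/-- Conjugating a monomial matrix by `diag(u)` multiplies it by the phase `u(r) - u(r - b)`, a
difference of `u`. -/
lemma monoMat_conj (u v : (Fin n → ZMod p) → Additive Circle) (b : Fin n → ZMod p) :
    monoMat 0 u * monoMat b v * (monoMat 0 u)ᴴ =
      monoMat 0 (fun r => u r - u (r - b)) * monoMat b v := by
  rw [monoMat_star, monoMat_mul, monoMat_mul, monoMat_mul]
  congr 1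
  · simp
  · refine funext fun r => ?_
    simp only [add_zero, zero_add, sub_zero]
    abel

/-- The gate `diag(u)` lies in level `k + 1` iff `u` has degree at most `k + 1`. Taking differences
lowers both sides by one, with the Paulis `X^b` producing all differences. -/
lemma monoMat_mem_iff (k : ℕ) (u : (Fin n → ZMod p) → Additive Circle) :
    monoMat 0 u ∈ CliffN p n (k + 1) ↔ u ∈ polyLT p n (Additive Circle) (k + 2) := by
  induction k generalizing u with
  | zero => exact monoMat_mem_one_iff u
  | succ k ih =>
    rw [polyLT_succ]
    have e : ∀ b, (fun r => u r - u (r - b)) = -(fun x => u (x + -b) - u x) := by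
      intro b; ext r; simp [sub_eq_add_neg]
    constructor
    · intro h b
      have := h.2 _ (shift_mem (-b))
      rw [monoMat_conj, cliff_mul_pauli_iff (shift_mem (-b)), ih, e, neg_mem_iff, neg_neg] at this
      exact this
    · intro h
      refine ⟨Matrix.mem_unitaryGroup_iff.2 (monoMat_mul_star 0 u), fun P hP => ?_⟩
      obtain ⟨b, v, -, rfl⟩ := pauli_form hP
      rw [monoMat_conj, cliff_mul_pauli_iff hP, ih, e, neg_mem_iff]
      exact h (-b)

lemma cliff_unitary {k : ℕ} {U : Matrix (Fin n → ZMod p) (Fin n → ZMod p) ℂ}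
    (hU : U ∈ CliffN p n (k + 1)) : U * Uᴴ = 1 := by
  cases k with
  | zero =>
    obtain ⟨φ, P, hP, rfl⟩ := hU
    obtain ⟨b, v, -, rfl⟩ := pauli_form hP
    rw [← Circle.coe_exp, smul_monoMat, monoMat_mul_star]
  | succ k => exact Matrix.mem_unitaryGroup_iff.1 hU.1

/-- Diagonal gates are unitary, so their diagonal entries are phases and `monoMat_mem_iff`
applies. -/
lemma mem_cliffDN_iff (k : ℕ) (U : Matrix (Fin n → ZMod p) (Fin n → ZMod p) ℂ) :
    U ∈ CliffDN p n (k + 1) ↔ ∃ u ∈ polyLT p n (Additive Circle) (k + 2), monoMat 0 u = U := by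
  constructor
  · rintro ⟨hU, hd⟩
    have h1 : ∀ r, ‖U r r‖ = 1 := by
      intro r
      have := congrFun (congrFun (cliff_unitary hU) r) r
      rw [Matrix.mul_apply, Finset.sum_eq_single r (fun c _ hc => by rw [hd hc.symm, zero_mul])
        (by simp), Matrix.conjTranspose_apply, Matrix.one_apply_eq, RCLike.star_def,
        Complex.mul_conj'] at this
      have h2 : ‖U r r‖ ^ 2 = 1 := by exact_mod_cast this
      exact (pow_eq_one_iff_of_nonneg (norm_nonneg _) two_ne_zero).1 h2
    have hu : monoMat 0 (fun r => Additive.ofMul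
        (⟨U r r, mem_sphere_zero_iff_norm.2 (h1 r)⟩ : Circle)) = U := by
      ext r c
      by_cases h : r = c
      · subst h
        simp only [monoMat, Matrix.of_apply, add_zero, if_true]
        rfl
      · simp [monoMat, h, hd h]
    exact ⟨_, (monoMat_mem_iff k _).1 (by rwa [hu]), hu⟩
  · rintro ⟨u, hu, rfl⟩
    exact ⟨(monoMat_mem_iff k u).2 hu, fun r c h => by simp [monoMat, h]⟩

end

/-! ### Coefficients and the product of cyclic groups -/

/-- The index set of the product: nonzero `a` in the box `{0, …, p - 1}^n` of weight at most `w`. -/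
abbrev BoxIdx (p n w : ℕ) :=
  {a : Fin n → ℕ // a ≠ 0 ∧ (∀ i, a i ≤ p - 1) ∧ ∑ i, a i ≤ w}

/-- The group `U(1) × ∏ a, Z_{p^{m(w,a)}}`, with the cyclic groups written multiplicatively. -/
abbrev BoxGroup (p n w : ℕ) :=
  Circle × ((a : BoxIdx p n w) → Multiplicative (ZMod (p ^ ((w - ∑ i, a.1 i) / (p - 1) + 1))))

section
variable {p n w : ℕ} [NeZero p]

lemma val_ne_zero {x : Fin n → ZMod p} (hx : x ≠ 0) : (fun i => (x i).val) ≠ 0 :=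
  fun h0 => hx (funext fun i => (ZMod.val_eq_zero _).1 (congrFun h0 i))

/-- The index in the product attached to `x ∈ Z_p^n`, via the representatives `0, …, p - 1`. -/
def toBox (x : Fin n → ZMod p) (hx : x ≠ 0) (h : ∑ i, (x i).val ≤ w) : BoxIdx p n w :=
  ⟨fun i => (x i).val, val_ne_zero hx, fun i => Nat.le_sub_one_of_lt (ZMod.val_lt (x i)), h⟩

lemma exists_toBox (a : BoxIdx p n w) : ∃ x hx h, toBox (p := p) (n := n) (w := w) x hx h = a := by
  obtain ⟨a, ha0, hbox, hwt⟩ := a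
  have hp0 := NeZero.pos p
  obtain ⟨x, rfl⟩ : ∃ x : Fin n → ZMod p, (fun i => (x i).val) = a :=
    ⟨fun i => (a i : ZMod p), funext fun i => ZMod.val_cast_of_lt (by have := hbox i; omega)⟩
  exact ⟨x, by rintro rfl; exact ha0 (by ext i; simp), hwt, rfl⟩

open Classical in
/-- The family of Newton coefficients `λ` attached to a group element: `λ_0` is the `U(1)` component,
`λ_a` for `0 < |a| ≤ w` is the root of unity given by the component at `a`, and `λ_a` is trivial for
`|a| > w`. -/
noncomputable def boxCoeff (t : BoxGroup p n w) (x : Fin n → ZMod p) : Additive Circle :=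
  if hx : x = 0 then Additive.ofMul t.1
  else if h : ∑ i, (x i).val ≤ w then
    Additive.ofMul (ZMod.toCircle (t.2 (toBox x hx h)).toAdd)
  else 0

lemma boxCoeff_zero (t : BoxGroup p n w) : boxCoeff t 0 = Additive.ofMul t.1 := by
  simp [boxCoeff]

lemma boxCoeff_of_le (t : BoxGroup p n w) {x : Fin n → ZMod p} (hx : x ≠ 0)
    (h : ∑ i, (x i).val ≤ w) :
    boxCoeff t x = Additive.ofMul (ZMod.toCircle (t.2 (toBox x hx h)).toAdd) := by
  rw [boxCoeff, dif_neg hx, dif_pos h]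

lemma boxCoeff_of_lt (t : BoxGroup p n w) {x : Fin n → ZMod p} (hx : x ≠ 0)
    (h : ¬ ∑ i, (x i).val ≤ w) : boxCoeff t x = 0 := by
  rw [boxCoeff, dif_neg hx, dif_neg h]

lemma boxCoeff_injective : Function.Injective (boxCoeff : BoxGroup p n w → _) := by
  intro s t h
  refine Prod.ext ?_ (funext fun a => ?_)
  · have := congrFun h 0
    rw [boxCoeff_zero, boxCoeff_zero] at this
    exact Additive.ofMul.injective this
  · obtain ⟨x, hx, hwt, rfl⟩ := exists_toBox a
    have := congrFun h x
    rw [boxCoeff_of_le s hx hwt, boxCoeff_of_le t hx hwt] at this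
    exact Multiplicative.toAdd.injective (ZMod.injective_toCircle (Additive.ofMul.injective this))

lemma boxCoeff_mul (s t : BoxGroup p n w) : boxCoeff (s * t) = boxCoeff s + boxCoeff t := by
  refine funext fun x => ?_
  rw [Pi.add_apply]
  by_cases hx : x = 0
  · subst hx
    simp only [boxCoeff_zero, Prod.fst_mul, ofMul_mul]
  · by_cases h : ∑ i, (x i).val ≤ w
    · simp only [boxCoeff_of_le _ hx h, Prod.snd_mul, Pi.mul_apply, toAdd_mul,
        AddChar.map_add_eq_mul, ofMul_mul]
    · simp only [boxCoeff_of_lt _ hx h, add_zero]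

lemma boxCoeff_one_right (z : Circle) {x : Fin n → ZMod p} (hx : x ≠ 0) :
    boxCoeff ((z, 1) : BoxGroup p n w) x = 0 := by
  by_cases h : ∑ i, (x i).val ≤ w
  · rw [boxCoeff_of_le _ hx h]
    simp
  · exact boxCoeff_of_lt _ hx h

/-- The coefficient families coming from the group are those satisfying the torsion conditions of
`mem_polyLT_succ_iff_coeff`: `m(w,a)` is the least `m` with `w < m (p - 1) + |a|`, and the
`N`-torsion of `U(1)` is the cyclic group of `N`-th roots of unity. -/
lemma mem_range_boxCoeff (hp : p.Prime) (μ : (Fin n → ZMod p) → Additive Circle) :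
    (∃ t : BoxGroup p n w, boxCoeff t = μ) ↔
      ∀ x : Fin n → ZMod p, x ≠ 0 → ∀ m, w < m * (p - 1) + ∑ i, (x i).val → p ^ m • μ x = 0 := by
  have hp1 := hp.one_lt
  constructor
  · rintro ⟨t, rfl⟩ x hx m hm
    by_cases h : ∑ i, (x i).val ≤ w
    · rw [boxCoeff_of_le t hx h, ← ofMul_pow, ← AddChar.map_nsmul_eq_pow, nsmul_eq_mul]
      have hle : (w - ∑ i, (x i).val) / (p - 1) + 1 ≤ m := by
        rw [Nat.add_one_le_iff, Nat.div_lt_iff_lt_mul (by omega)]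
        omega
      have : ((p ^ m : ℕ) : ZMod (p ^ ((w - ∑ i, (toBox x hx h).1 i) / (p - 1) + 1))) = 0 :=
        (ZMod.natCast_eq_zero_iff _ _).2 (pow_dvd_pow p hle)
      rw [this, zero_mul, AddChar.map_zero_eq_one, ofMul_one]
    · rw [boxCoeff_of_lt t hx h, smul_zero]
  · intro hμ
    have hex : ∀ a : BoxIdx p n w, ∃ j : ZMod (p ^ ((w - ∑ i, a.1 i) / (p - 1) + 1)),
        ∀ x hx h, toBox x hx h = a → Additive.ofMul (ZMod.toCircle j) = μ x := by
      intro a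
      obtain ⟨x, hx, h, rfl⟩ := exists_toBox a
      have htors : (μ x).toMul ^ (p ^ ((w - ∑ i, (toBox x hx h).1 i) / (p - 1) + 1)) = 1 := by
        rw [← toMul_nsmul, hμ x hx]
        · rfl
        · have := Nat.lt_div_mul_add (a := w - ∑ i, (x i).val) (b := p - 1) (by omega)
          simp only [add_mul, one_mul, toBox]
          omega
      obtain ⟨j, hj⟩ := exists_toCircle htors
      refine ⟨j, fun y hy h' hyx => ?_⟩
      obtain rfl : y = x := funext fun i =>
        ZMod.val_injective p (congrFun (congrArg Subtype.val hyx) i)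
      rw [hj, ofMul_toMul]
    choose j hj using hex
    refine ⟨((μ 0).toMul, fun a => Multiplicative.ofAdd (j a)), funext fun x => ?_⟩
    by_cases hx : x = 0
    · subst hx
      rw [boxCoeff_zero, ofMul_toMul]
    · by_cases h : ∑ i, (x i).val ≤ w
      · rw [boxCoeff_of_le _ hx h]
        exact hj _ x hx h rfl
      · have := hμ x hx 0 (by omega)
        rw [pow_zero, one_smul] at this
        rw [boxCoeff_of_lt _ hx h, this]

/-- A constant function has its value as coefficient at `0`, and no other coefficients: `Δ^0 = 1`,
while the other monomials lie in `I`, which kills constants. -/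
lemma coeffEquiv_const (c : Additive Circle) :
    coeffEquiv p n (Additive Circle) (fun _ => c) 0 = c ∧
      ∀ x ≠ 0, coeffEquiv p n (Additive Circle) (fun _ => c) x = 0 := by
  refine ⟨?_, fun x hx => ?_⟩
  · have : mon p (fun i => ((0 : Fin n → ZMod p) i).val) = shiftEl 0 := by
      simp [mon, shiftEl_zero]
    rw [coeffEquiv_apply, this, pairing_shiftEl]
  · have h1 : mon p (fun i => (x i).val) ∈ augI p n ^ 1 := by
      refine Ideal.pow_le_pow_right ?_ (mon_mem _)
      by_contra hlt
      refine val_ne_zero hx (funext fun i => ?_)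
      have := Finset.single_le_sum (f := fun i => (x i).val) (fun _ _ => Nat.zero_le _)
        (Finset.mem_univ i)
      simp only [Pi.zero_apply] at this ⊢
      omega
    rw [coeffEquiv_apply]
    exact const_mem c _ h1

end

/-- For `n` qudits of prime dimension `p` and any `w ≥ 1`, the abelian
group `C^w_d` of diagonal gates in the `w`-th level of the Clifford hierarchy is
isomorphic to `U(1) × ∏_a Z_{p^{m(w,a)}}`, the product running over all nonzero vectors
`a ∈ {0,…,p-1}^n` with `wt(a) ≤ w`, where `m(w,a) = ⌊(w - wt(a))/(p-1)⌋ + 1` and the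
`U(1)` factor corresponds to global phases.  The isomorphism is expressed as a
multiplicative bijection onto `C^w_d` sending `(z, 1)` to `z • I`. -/
theorem diagonal_clifford_iso_n_qudits (p n w : ℕ) [NeZero p] (hp : p.Prime) (hn : 1 ≤ n)
    (hw : 1 ≤ w) :
    ∃ f : Circle ×
        ((a : {a : Fin n → ℕ // a ≠ 0 ∧ (∀ i, a i ≤ p - 1) ∧ ∑ i, a i ≤ w}) →
          Multiplicative (ZMod (p ^ ((w - ∑ i, a.1 i) / (p - 1) + 1)))) →
        Matrix (Fin n → ZMod p) (Fin n → ZMod p) ℂ,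
      Function.Injective f ∧ Set.range f = CliffDN p n w ∧
      (∀ x y, f (x * y) = f x * f y) ∧
      (∀ z : Circle,
        f (z, 1) = (z : ℂ) • (1 : Matrix (Fin n → ZMod p) (Fin n → ZMod p) ℂ)) := by
  refine ⟨fun t => monoMat 0 ((coeffEquiv p n (Additive Circle)).symm (boxCoeff t)), ?_, ?_, ?_, ?_⟩
  · intro s t h
    exact boxCoeff_injective
      ((coeffEquiv p n (Additive Circle)).symm.injective (monoMat_inj h).2)
  · obtain ⟨k, rfl⟩ : ∃ k, w = k + 1 := ⟨w - 1, by omega⟩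
    ext U
    rw [mem_cliffDN_iff]
    constructor
    · rintro ⟨t, rfl⟩
      refine ⟨_, ?_, rfl⟩
      rw [mem_polyLT_succ_iff_coeff hp, AddEquiv.apply_symm_apply]
      exact (mem_range_boxCoeff hp _).1 ⟨t, rfl⟩
    · rintro ⟨u, hu, rfl⟩
      rw [mem_polyLT_succ_iff_coeff hp] at hu
      obtain ⟨t, ht⟩ := (mem_range_boxCoeff hp _).2 hu
      exact ⟨t, by simp only [ht, AddEquiv.symm_apply_apply]⟩
  · intro s t
    simp only [boxCoeff_mul, map_add, monoMat_diag_mul]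
  · intro z
    rw [phase_eq]
    refine congrArg (monoMat 0) ?_
    rw [AddEquiv.symm_apply_eq]
    refine funext fun x => ?_
    by_cases hx : x = 0
    · subst hx
      rw [boxCoeff_zero, (coeffEquiv_const _).1]
    · rw [boxCoeff_one_right z hx, (coeffEquiv_const _).2 x hx]
end

section
/- Let p be prime, m ≥ 1, and let U_{m,1} = Σ_{j∈Z_p} exp(2πi j / p^m)|j⟩⟨j|. Then U_{m,1} X U_{m,1}† = exp(2πi/p^m) · P_{m−1}[0]^{−1} · X, where P_{m−1}[0] = Σ_{j≠0}|j⟩⟨j| + exp(2πi/p^{m−1})|0⟩⟨0| is the phase gate on the basis state |0⟩. -/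
/-!
Every gate here except `X` is diagonal, and `X` is supported on the entries `(c + 1, c)`, so the
identity reduces to one scalar equation for each `c`. With `val` the representative in `[0, p)`, the
left side has phase `(val (c + 1) - val c) / p ^ m` (in turns). The difference of representatives is
`1`, except at the wrap-around `c + 1 = 0`, where it is `1 - p`; the extra phase
`-p / p ^ m = -1 / p ^ (m - 1)` is the one contributed by the inverse phase gate on `|0⟩`.
-/

open Matrix Complex

/-- Single-qudit shift gate `X |j⟩ = |j+1⟩` on a qudit of dimension `p`. -/
noncomputable def Xmat1 (p : ℕ) [NeZero p] : Matrix (ZMod p) (ZMod p) ℂ :=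
  Matrix.of fun r c => if r = c + 1 then 1 else 0

/-- Single-qudit phase gate `Z |j⟩ = ω^j |j⟩`, `ω = exp(2πi/p)`. -/
noncomputable def Zmat1 (p : ℕ) [NeZero p] : Matrix (ZMod p) (ZMod p) ℂ :=
  Matrix.of fun r c =>
    if r = c then Complex.exp (2 * Real.pi * Complex.I * ((c.val : ℂ) / (p : ℂ))) else 0

/-- The gate `U_{m,a} = Σ_j exp(2πi j^a / p^m) |j⟩⟨j|`, powers computed with the
integer representative `0 ≤ j ≤ p-1`. -/
noncomputable def Uma (p : ℕ) [NeZero p] (m a : ℕ) : Matrix (ZMod p) (ZMod p) ℂ :=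
  Matrix.of fun r c =>
    if r = c then Complex.exp (2 * Real.pi * Complex.I * ((r.val : ℂ) ^ a / (p : ℂ) ^ m)) else 0

/-- The phase gate `P_m[k] = Σ_{j≠k} |j⟩⟨j| + exp(2πi/p^m) |k⟩⟨k|`
(for `m = 0` this is the identity, since `exp(2πi/p^0) = 1`). -/
noncomputable def PhaseGate (p : ℕ) [NeZero p] (m : ℕ) (k : ZMod p) :
    Matrix (ZMod p) (ZMod p) ℂ :=
  Matrix.of fun r c =>
    if r = c then (if r = k then Complex.exp (2 * Real.pi * Complex.I / (p : ℂ) ^ m) else 1)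
    else 0

lemma Uma_eq_diagonal (p : ℕ) [NeZero p] (m a : ℕ) :
    Uma p m a = diagonal fun j : ZMod p =>
      Complex.exp (2 * Real.pi * Complex.I * ((j.val : ℂ) ^ a / (p : ℂ) ^ m)) := by
  ext r c
  simp [Uma, diagonal_apply]

lemma PhaseGate_inv_eq_diagonal (p : ℕ) [NeZero p] (m : ℕ) (k : ZMod p) :
    (PhaseGate p m k)⁻¹ = diagonal fun j : ZMod p =>
      if j = k then Complex.exp (-(2 * Real.pi * Complex.I / (p : ℂ) ^ m)) else 1 := by
  have h : PhaseGate p m k = diagonal fun j : ZMod p =>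
      if j = k then Complex.exp (2 * Real.pi * Complex.I / (p : ℂ) ^ m) else 1 := by
    ext r c
    simp [PhaseGate, diagonal_apply]
  apply Matrix.inv_eq_right_inv
  rw [h, diagonal_mul_diagonal, ← diagonal_one]
  congr 1
  funext j
  by_cases hj : j = k
  · simp [hj, ← Complex.exp_add]
  · simp [hj]

/-- Representatives increase by one under `c ↦ c + 1`, except that they drop by `p - 1` at the
wrap-around. -/
lemma val_succ_sub_val (p : ℕ) [NeZero p] (c : ZMod p) :
    ((c + 1).val : ℂ) - (c.val : ℂ) = 1 - if c + 1 = 0 then (p : ℂ) else 0 := by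
  have hlt := ZMod.val_lt c
  have hval : (c + 1).val = (c.val + 1) % p := by
    rw [ZMod.val_add, ZMod.val_one_eq_one_mod, Nat.add_mod_mod]
  have h0 : c + 1 = 0 ↔ c.val + 1 = p := by
    rw [← ZMod.val_eq_zero, hval]
    constructor
    · intro h
      exact le_antisymm hlt (Nat.le_of_dvd (Nat.succ_pos _) (Nat.dvd_of_mod_eq_zero h))
    · intro h
      rw [h, Nat.mod_self]
  by_cases h : c + 1 = 0
  · have hp : (p : ℂ) = (c.val : ℂ) + 1 := by exact_mod_cast (h0.1 h).symm
    rw [if_pos h, h, ZMod.val_zero, hp]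
    push_cast
    ring
  · have hlt' : c.val + 1 < p := lt_of_le_of_ne hlt (mt h0.2 h)
    rw [if_neg h, hval, Nat.mod_eq_of_lt hlt']
    push_cast
    ring

/-- Let `p` be prime, `m ≥ 1`, and
`U_{m,1} = Σ_j exp(2πi j/p^m)|j⟩⟨j|`.  Then
`U_{m,1} X U_{m,1}† = exp(2πi/p^m) ⬝ P_{m-1}[0]⁻¹ ⬝ X`. -/
theorem conj_X_by_Um1 (p m : ℕ) [NeZero p] (hp : p.Prime) (hm : 1 ≤ m) :
    Uma p m 1 * Xmat1 p * (Uma p m 1)ᴴ =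
      Complex.exp (2 * Real.pi * Complex.I / (p : ℂ) ^ m) •
        ((PhaseGate p (m - 1) 0)⁻¹ * Xmat1 p) := by
  have hp0 : (p : ℂ) ≠ 0 := Nat.cast_ne_zero.2 (NeZero.ne p)
  obtain ⟨n, rfl⟩ : ∃ n, m = n + 1 := ⟨m - 1, by omega⟩
  rw [Uma_eq_diagonal, PhaseGate_inv_eq_diagonal, diagonal_conjTranspose]
  ext r c
  rw [mul_diagonal, diagonal_mul, Matrix.smul_apply, diagonal_mul, smul_eq_mul]
  by_cases hrc : r = c + 1
  · subst hrc
    have hv := val_succ_sub_val p c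
    have hconj : star (Complex.exp (2 * Real.pi * Complex.I *
          ((c.val : ℂ) ^ 1 / (p : ℂ) ^ (n + 1)))) =
        Complex.exp (-(2 * Real.pi * Complex.I * ((c.val : ℂ) ^ 1 / (p : ℂ) ^ (n + 1)))) := by
      rw [Complex.star_def, ← Complex.exp_conj]
      simp [-ZMod.natCast_val, Complex.conj_ofNat]
    simp only [Xmat1, of_apply, if_true, mul_one, Pi.star_apply, Nat.add_sub_cancel]
    rw [hconj, ← Complex.exp_add]
    by_cases h : c + 1 = 0
    · rw [if_pos h] at hv ⊢
      rw [← Complex.exp_add]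
      congr 1
      rw [sub_eq_iff_eq_add] at hv
      rw [hv]
      field_simp
      ring
    · rw [if_neg h] at hv ⊢
      rw [mul_one]
      congr 1
      rw [sub_eq_iff_eq_add] at hv
      rw [hv]
      ring
  · simp [Xmat1, hrc]
end

section
/- For n qudits of prime dimension p and any w with 1 ≤ w ≤ p−1, every diagonal gate U in the w-th level of the Clifford hierarchy has the form U = e^{iφ} Σ_{j∈Z_p^n} ω^{Θ(j)} |j⟩⟨j|, where ω = exp(2πi/p) and Θ : {0,…,p−1}^n → Z_p agrees with a multivariate polynomial over Z_p of total degree at most w. In particular, up to a global phase all diagonal entries of U are p-th roots of unity. -/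
/-! The proof is by induction on `w`, and it works with the diagonal `d` of `U` as a function
`ℤ_pⁿ → ℂ`. Write `ψ t = ω ^ t`.

For `w = 1`, every Pauli matrix is supported on the graph of a translation `s ↦ s + a`, where its
entries are `c ψ(b · s)` (`pauli_form`); if it is diagonal, then `a = 0`.

For the step, `C^w` is stable under right multiplication by `X_iᴴ`, so the diagonal matrix
`U X_i Uᴴ X_iᴴ` with entries `d(r) / d(r - e_i)` lies in `C^w`. By induction this quotient is
`z ψ(g)` with `deg g ≤ w ≤ p - 2`. For `k ≤ p - 2` the
integer `k + 1` is invertible mod `p`, so power sums of exponent `k` are polynomials of degree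
`k + 1` as in characteristic zero; hence `g` is the backward difference along `e_i` of a
polynomial `G` of degree at most `w + 1` (`exists_antidiff`). Then `d ψ(-G)` is multiplied by `z`
under translation by `e_i`, and since this translation has order `p`, `z` is a `p`-th root of
unity, say `ψ a`; replacing `G` by `G + a x_i` makes `d ψ(-G)` independent of `x_i`
(`exists_potential`). Setting the coordinates to zero one after another (`exists_telescope`)
expresses `d` as `d(0) ψ(K)` with `deg K ≤ w + 1`. -/

open Matrix Complex

namespace DiagClifford

variable {p n : ℕ}

/-! ### Backward antidifferences over `ℤ_p` -/

/-- Power sums: for `k + 1 < p` the function `t ↦ t ^ k` on `ℤ_p` is the backward difference of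
a polynomial of degree at most `k + 1`. -/
lemma exists_antidiff_pow (hp : p.Prime) (k : ℕ) (hk : k + 1 < p) :
    ∃ f : Polynomial (ZMod p), f.natDegree ≤ k + 1 ∧
      ∀ t : ZMod p, f.eval t - f.eval (t - 1) = t ^ k := by
  have : Fact p.Prime := ⟨hp⟩
  induction k using Nat.strong_induction_on with
  | _ k ih =>
    choose! f hf1 hf2 using ih
    have hk0 : ((k + 1 : ℕ) : ZMod p) ≠ 0 := by
      intro h
      rw [ZMod.natCast_eq_zero_iff] at h
      exact absurd (Nat.le_of_dvd (Nat.succ_pos k) h) (by omega)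
    -- `t ^ (k + 1) - (t - 1) ^ (k + 1) = (k + 1) t ^ k` up to lower powers of `t`, whose
    -- antidifferences are already available.
    refine ⟨Polynomial.C (((k + 1 : ℕ) : ZMod p)⁻¹) * (Polynomial.X ^ (k + 1) +
      ∑ j ∈ Finset.range k,
        Polynomial.C ((-1) ^ (k + 1 - j) * ((k + 1).choose j : ZMod p)) * f j), ?_, ?_⟩
    · refine (Polynomial.natDegree_C_mul_le _ _).trans ?_
      refine Polynomial.natDegree_add_le_of_degree_le (Polynomial.natDegree_X_pow_le _) ?_
      refine Polynomial.natDegree_sum_le_of_forall_le _ _ fun j hj => ?_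
      have hj := Finset.mem_range.1 hj
      refine (Polynomial.natDegree_C_mul_le _ _).trans ((hf1 j hj (by omega)).trans (by omega))
    · intro t
      have e1 : (t - 1) ^ (k + 1) = t ^ (k + 1) - ((k + 1 : ℕ) : ZMod p) * t ^ k +
          ∑ j ∈ Finset.range k, (-1) ^ (k + 1 - j) * ((k + 1).choose j : ZMod p) * t ^ j := by
        rw [sub_eq_add_neg, add_pow, Finset.sum_range_succ, Finset.sum_range_succ]
        simp only [Nat.choose_self, Nat.sub_self, Nat.choose_succ_self_right]
        rw [show k + 1 - k = 1 by omega]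
        rw [Finset.sum_congr rfl fun j _ => show t ^ j * (-1) ^ (k + 1 - j) *
          ((k + 1).choose j : ZMod p) = (-1) ^ (k + 1 - j) * ((k + 1).choose j : ZMod p) * t ^ j
          by ring]
        push_cast
        ring
      have e2 : ∑ j ∈ Finset.range k, (-1) ^ (k + 1 - j) * ((k + 1).choose j : ZMod p) * t ^ j =
          ∑ j ∈ Finset.range k, (-1) ^ (k + 1 - j) * ((k + 1).choose j : ZMod p) *
              (f j).eval t -
            ∑ j ∈ Finset.range k, (-1) ^ (k + 1 - j) * ((k + 1).choose j : ZMod p) *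
              (f j).eval (t - 1) := by
        rw [← Finset.sum_sub_distrib]
        refine Finset.sum_congr rfl fun j hj => ?_
        have hj := Finset.mem_range.1 hj
        rw [← hf2 j hj (by omega) t]
        ring
      rw [e2] at e1
      simp only [Polynomial.eval_mul, Polynomial.eval_C, Polynomial.eval_add,
        Polynomial.eval_pow, Polynomial.eval_X, Polynomial.eval_finsetSum]
      rw [e1, ← mul_sub, inv_mul_eq_iff_eq_mul₀ hk0]
      ring

lemma totalDegree_aeval_X_le (i : Fin n) (f : Polynomial (ZMod p)) :
    (Polynomial.aeval (MvPolynomial.X i : MvPolynomial (Fin n) (ZMod p)) f).totalDegree ≤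
      f.natDegree := by
  rw [Polynomial.aeval_eq_sum_range]
  refine MvPolynomial.totalDegree_finsetSum_le fun j hj => ?_
  refine (MvPolynomial.totalDegree_smul_le _ _).trans ?_
  have h1 : (MvPolynomial.X i : MvPolynomial (Fin n) (ZMod p)).totalDegree ≤ 1 := by
    rw [MvPolynomial.X]
    exact (MvPolynomial.totalDegree_monomial_le _ _).trans (by simp)
  have h2 := MvPolynomial.totalDegree_pow (MvPolynomial.X i : MvPolynomial (Fin n) (ZMod p)) j
  have h3 := Finset.mem_range.1 hj
  nlinarith

lemma eval_aeval_X (i : Fin n) (f : Polynomial (ZMod p)) (x : Fin n → ZMod p) :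
    MvPolynomial.eval x (Polynomial.aeval (MvPolynomial.X i : MvPolynomial (Fin n) (ZMod p)) f) =
      f.eval (x i) := by
  rw [Polynomial.aeval_eq_sum_range, Polynomial.eval_eq_sum_range]
  simp [MvPolynomial.smul_eval]

/-- A polynomial of degree `w < p - 1` is, as a function, the backward difference along any
coordinate of a polynomial of degree at most `w + 1`. -/
lemma exists_antidiff (hp : p.Prime) {w : ℕ} (hw : w + 1 < p) (i : Fin n)
    (g : MvPolynomial (Fin n) (ZMod p)) (hg : g.totalDegree ≤ w) :
    ∃ G : MvPolynomial (Fin n) (ZMod p), G.totalDegree ≤ w + 1 ∧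
      ∀ x, MvPolynomial.eval x G - MvPolynomial.eval (x - Pi.single i 1) G =
        MvPolynomial.eval x g := by
  choose! f hf1 hf2 using exists_antidiff_pow hp
  have hdeg : ∀ m ∈ g.support, m i + ((m.erase i).sum fun _ e => e) ≤ w := by
    intro m hm
    have h1 := (MvPolynomial.le_totalDegree hm).trans hg
    rwa [← Finsupp.add_sum_erase' m i (fun _ e => e) (fun _ => rfl)] at h1
  refine ⟨∑ m ∈ g.support, MvPolynomial.monomial (m.erase i) (g.coeff m) *
    Polynomial.aeval (MvPolynomial.X i) (f (m i)), ?_, ?_⟩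
  · refine MvPolynomial.totalDegree_finsetSum_le fun m hm => ?_
    refine (MvPolynomial.totalDegree_mul _ _).trans ?_
    have h1 := hdeg m hm
    have h2 := MvPolynomial.totalDegree_monomial_le (m.erase i) (g.coeff m)
    have h3 := (totalDegree_aeval_X_le i (f (m i))).trans (hf1 (m i) (by omega))
    have h4 : ((m.erase i).sum fun _ => id) = (m.erase i).sum fun _ e => e := rfl
    omega
  · intro x
    conv_rhs => rw [g.as_sum]
    simp only [map_sum, map_mul, eval_aeval_X, ← Finset.sum_sub_distrib]
    refine Finset.sum_congr rfl fun m hm => ?_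
    have h1 := hdeg m hm
    have hx : MvPolynomial.eval (x - Pi.single i 1)
        (MvPolynomial.monomial (m.erase i) (g.coeff m)) =
        MvPolynomial.eval x (MvPolynomial.monomial (m.erase i) (g.coeff m)) := by
      rw [MvPolynomial.eval_monomial, MvPolynomial.eval_monomial]
      congr 1
      refine Finsupp.prod_congr fun j hj => ?_
      have : j ≠ i := by
        rintro rfl
        simp at hj
      simp [this]
    rw [hx, ← mul_sub]
    simp only [Pi.sub_apply, Pi.single_eq_same]
    rw [hf2 (m i) (by omega), MvPolynomial.eval_monomial, MvPolynomial.eval_monomial, mul_assoc,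
      mul_comm _ (x i ^ m i), Finsupp.mul_prod_erase' m i (fun j e => x j ^ e) (by simp)]

/-! ### Restriction to coordinate subspaces -/

/-- Substituting zero for the variables in `s`. -/
noncomputable def zeroOn (s : Finset (Fin n)) (g : MvPolynomial (Fin n) (ZMod p)) :
    MvPolynomial (Fin n) (ZMod p) :=
  MvPolynomial.bind₁ (fun j => if j ∈ s then 0 else MvPolynomial.X j) g

lemma eval_zeroOn (s : Finset (Fin n)) (g : MvPolynomial (Fin n) (ZMod p))
    (x : Fin n → ZMod p) :
    MvPolynomial.eval x (zeroOn s g) =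
      MvPolynomial.eval (fun j => if j ∈ s then 0 else x j) g := by
  have h := MvPolynomial.eval₂Hom_bind₁ (RingHom.id (ZMod p)) x
    (fun j => if j ∈ s then 0 else MvPolynomial.X j) g
  change MvPolynomial.eval x (zeroOn s g) = MvPolynomial.eval _ g at h
  rw [h]
  congr 2
  funext j
  split_ifs <;> simp

lemma totalDegree_zeroOn_le (s : Finset (Fin n)) (g : MvPolynomial (Fin n) (ZMod p)) :
    (zeroOn s g).totalDegree ≤ g.totalDegree := by
  have h : zeroOn s g = ∑ m ∈ g.support, MvPolynomial.C (g.coeff m) *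
      ∏ j ∈ m.support, (if j ∈ s then 0 else MvPolynomial.X j) ^ m j := by
    conv_lhs => rw [g.as_sum]
    simp only [zeroOn, map_sum, MvPolynomial.bind₁_monomial]
  rw [h]
  refine MvPolynomial.totalDegree_finsetSum_le fun m hm => ?_
  refine (MvPolynomial.totalDegree_mul _ _).trans ?_
  rw [MvPolynomial.totalDegree_C, zero_add]
  refine (MvPolynomial.totalDegree_finsetProd _ _).trans
    (le_trans ?_ (MvPolynomial.le_totalDegree hm))
  refine Finset.sum_le_sum fun j _ => (MvPolynomial.totalDegree_pow _ _).trans ?_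
  have : (if j ∈ s then 0 else MvPolynomial.X j :
      MvPolynomial (Fin n) (ZMod p)).totalDegree ≤ 1 := by
    split_ifs
    · simp
    · rw [MvPolynomial.X]
      exact (MvPolynomial.totalDegree_monomial_le _ _).trans (by simp)
  exact (Nat.mul_le_mul_left _ this).trans (by simp)

/-! ### From multiplicative differences to a polynomial phase -/

variable [NeZero p]

/-- The additive character `t ↦ ω ^ t` of `ℤ_p`. -/
noncomputable def psi (p : ℕ) [NeZero p] : AddChar (ZMod p) ℂ := ZMod.stdAddChar

lemma psi_apply (t : ZMod p) :
    psi p t = Complex.exp (2 * Real.pi * Complex.I * ((t.val : ℂ) / (p : ℂ))) := by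
  rw [psi, ZMod.stdAddChar_apply, ZMod.toCircle_apply]
  congr 1
  ring

lemma psi_norm (t : ZMod p) : ‖psi p t‖ = 1 := by
  rw [psi, ZMod.stdAddChar_apply]
  exact Circle.norm_coe _

lemma psi_ne_zero (t : ZMod p) : psi p t ≠ 0 := by
  rw [← norm_ne_zero_iff, psi_norm]
  exact one_ne_zero

lemma exists_psi_of_pow_eq_one (hp : p.Prime) {z : ℂ} (hz : z ^ p = 1) :
    ∃ a : ZMod p, z = psi p a := by
  have : Fact (1 < p) := ⟨hp.one_lt⟩
  have h1 : psi p 1 = Complex.exp (2 * Real.pi * Complex.I / p) := by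
    rw [psi_apply, ZMod.val_one]
    congr 1
    push_cast
    ring
  obtain ⟨k, -, hk⟩ :=
    (Complex.isPrimitiveRoot_exp p hp.ne_zero).eq_pow_of_pow_eq_one hz
  refine ⟨(k : ZMod p), ?_⟩
  rw [← hk, ← h1, ← AddChar.map_nsmul_eq_pow, nsmul_one]

lemma add_val_smul_single (x : Fin n → ZMod p) (i : Fin n) (t : ZMod p) :
    x + (t - x i).val • Pi.single i (1 : ZMod p) = Function.update x i t := by
  ext j
  by_cases h : j = i
  · subst h
    rw [Pi.add_apply, Pi.smul_apply, Pi.single_eq_same, nsmul_one, ZMod.natCast_zmod_val]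
    simp
  · simp [h]

/-- If the multiplicative backward difference of `d` along `e_i` is a constant times the phase of
a polynomial of degree `w < p - 1`, then the dependence of `d` on `x_i` is the phase of a
polynomial `G` of degree at most `w + 1`; the constant is absorbed because translation by `e_i`
has order `p`. -/
lemma exists_potential (hp : p.Prime) {w : ℕ} (hw : w + 1 < p) (i : Fin n)
    (d : (Fin n → ZMod p) → ℂ) (hd : ∀ x, d x ≠ 0) (z : ℂ)
    (g : MvPolynomial (Fin n) (ZMod p)) (hg : g.totalDegree ≤ w)
    (h : ∀ x, d x = z * psi p (MvPolynomial.eval x g) * d (x - Pi.single i 1)) :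
    ∃ G : MvPolynomial (Fin n) (ZMod p), G.totalDegree ≤ w + 1 ∧
      ∀ x t, d x = d (Function.update x i t) *
        psi p (MvPolynomial.eval x G - MvPolynomial.eval (Function.update x i t) G) := by
  obtain ⟨G, hG1, hG2⟩ := exists_antidiff hp hw i g hg
  have hD : ∀ x (k : ℕ), d (x + k • Pi.single i 1) *
      psi p (-MvPolynomial.eval (x + k • Pi.single i 1) G) =
      z ^ k * (d x * psi p (-MvPolynomial.eval x G)) := by
    intro x k
    induction k with
    | zero => simp
    | succ k ih =>
      rw [pow_succ', mul_assoc, ← ih]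
      have e : x + (k + 1) • Pi.single i (1 : ZMod p) - Pi.single i 1 =
          x + k • Pi.single i 1 := by
        rw [succ_nsmul]
        abel
      have h1 := h (x + (k + 1) • Pi.single i 1)
      have h2 := hG2 (x + (k + 1) • Pi.single i 1)
      rw [e] at h1 h2
      rw [h1, ← h2, sub_eq_add_neg, AddChar.map_add_eq_mul]
      have h3 : psi p (MvPolynomial.eval (x + (k + 1) • Pi.single i 1) G) *
          psi p (-MvPolynomial.eval (x + (k + 1) • Pi.single i 1) G) = 1 := by
        rw [← AddChar.map_add_eq_mul]
        simp
      linear_combination (z * psi p (-MvPolynomial.eval (x + k • Pi.single i 1) G) *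
        d (x + k • Pi.single i 1)) * h3
  obtain ⟨a, rfl⟩ : ∃ a : ZMod p, z = psi p a := by
    refine exists_psi_of_pow_eq_one hp ?_
    have h0 := hD 0 p
    have e : (0 : Fin n → ZMod p) + p • Pi.single i 1 = 0 := by
      ext j
      simp
    rw [e] at h0
    exact (mul_eq_right₀ (mul_ne_zero (hd 0) (psi_ne_zero _))).1 h0.symm
  refine ⟨G + MvPolynomial.C a * MvPolynomial.X i, ?_, ?_⟩
  · refine (MvPolynomial.totalDegree_add _ _).trans (max_le hG1 ?_)
    refine (MvPolynomial.totalDegree_mul _ _).trans ?_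
    have : (MvPolynomial.X i : MvPolynomial (Fin n) (ZMod p)).totalDegree ≤ 1 := by
      rw [MvPolynomial.X]
      exact (MvPolynomial.totalDegree_monomial_le _ _).trans (by simp)
    rw [MvPolynomial.totalDegree_C]
    omega
  · intro x t
    have h0 := hD x (t - x i).val
    rw [add_val_smul_single, ← AddChar.map_nsmul_eq_pow] at h0
    have e : (t - x i).val • a = (t - x i) * a := by simp
    rw [e] at h0
    simp only [map_add, map_mul, MvPolynomial.eval_C, MvPolynomial.eval_X,
      Function.update_self]
    have h1 : psi p ((t - x i) * a) * psi p (-MvPolynomial.eval x G) *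
        psi p (MvPolynomial.eval x G + a * x i - a * t) = 1 := by
      rw [← AddChar.map_add_eq_mul, ← AddChar.map_add_eq_mul]
      convert AddChar.map_zero_eq_one (psi p) using 2
      ring
    rw [show MvPolynomial.eval x G + a * x i -
      (MvPolynomial.eval (Function.update x i t) G + a * t) =
      -MvPolynomial.eval (Function.update x i t) G + (MvPolynomial.eval x G + a * x i - a * t)
      by ring, AddChar.map_add_eq_mul]
    linear_combination (-psi p (MvPolynomial.eval x G + a * x i - a * t)) * h0 - d x * h1

/-- If the dependence of `d` on each single coordinate is a polynomial phase of degree at most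
`w`, then so is its dependence on any set `s` of coordinates. -/
lemma exists_telescope {w : ℕ} (d : (Fin n → ZMod p) → ℂ)
    (G : Fin n → MvPolynomial (Fin n) (ZMod p)) (hG : ∀ i, (G i).totalDegree ≤ w)
    (h : ∀ i x t, d x = d (Function.update x i t) *
      psi p (MvPolynomial.eval x (G i) - MvPolynomial.eval (Function.update x i t) (G i)))
    (s : Finset (Fin n)) :
    ∃ K : MvPolynomial (Fin n) (ZMod p), K.totalDegree ≤ w ∧
      ∀ x, d x = d (fun j => if j ∈ s then 0 else x j) * psi p (MvPolynomial.eval x K) := by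
  induction s using Finset.induction_on with
  | empty => exact ⟨0, by simp, fun x => by simp⟩
  | insert i s hi ih =>
    obtain ⟨K, hK1, hK2⟩ := ih
    refine ⟨K + (zeroOn s (G i) - zeroOn (insert i s) (G i)), ?_, fun x => ?_⟩
    · refine (MvPolynomial.totalDegree_add _ _).trans (max_le hK1 ?_)
      exact (MvPolynomial.totalDegree_sub _ _).trans
        (max_le ((totalDegree_zeroOn_le _ _).trans (hG i))
          ((totalDegree_zeroOn_le _ _).trans (hG i)))
    · have e : Function.update (fun j => if j ∈ s then 0 else x j) i 0 =
          fun j => if j ∈ insert i s then 0 else x j := by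
        ext j
        by_cases hj : j = i
        · subst hj
          simp
        · simp [hj]
      have h1 := h i (fun j => if j ∈ s then 0 else x j) 0
      rw [e] at h1
      rw [hK2 x, h1, map_add (MvPolynomial.eval x), map_sub (MvPolynomial.eval x), eval_zeroOn, eval_zeroOn, AddChar.map_add_eq_mul]
      ring

/-! ### Pauli matrices and the hierarchy -/

/-- The translation operator `|j⟩ ↦ |j + a⟩`. -/
noncomputable def shift (a : Fin n → ZMod p) : Matrix (Fin n → ZMod p) (Fin n → ZMod p) ℂ :=
  Matrix.of fun r c => if r = c + a then 1 else 0

lemma XmatN_eq_shift (i : Fin n) : XmatN p n i = shift (Pi.single i 1) := by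
  ext r c
  have : Function.update c i (c i + 1) = c + Pi.single i 1 := by
    ext j
    by_cases hj : j = i
    · subst hj
      simp
    · simp [hj]
  simp only [XmatN, shift, Matrix.of_apply, this]

lemma shift_mul_shift (a b : Fin n → ZMod p) : shift a * shift b = shift (a + b) := by
  ext r c
  simp only [Matrix.mul_apply, shift, Matrix.of_apply, mul_ite, mul_one, mul_zero,
    Finset.sum_ite_eq', Finset.mem_univ, if_true]
  rw [add_assoc, add_comm b a]

lemma shift_zero : shift (0 : Fin n → ZMod p) = 1 := by
  ext r c
  simp [shift, Matrix.one_apply]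

lemma shift_conjTranspose (a : Fin n → ZMod p) : (shift a)ᴴ = shift (-a) := by
  ext r c
  simp only [Matrix.conjTranspose_apply, shift, Matrix.of_apply]
  have : c = r + a ↔ r = c + -a := by
    rw [← sub_eq_add_neg, eq_sub_iff_add_eq, eq_comm]
  by_cases h : c = r + a
  · rw [if_pos h, if_pos (this.1 h), star_one]
  · rw [if_neg h, if_neg (mt this.2 h), star_zero]

lemma shift_nsmul (a : Fin n → ZMod p) (k : ℕ) : shift (k • a) = shift a ^ k := by
  induction k with
  | zero => simp [shift_zero]
  | succ k ih => rw [succ_nsmul, ← shift_mul_shift, ih, pow_succ]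

lemma shift_mem (i : Fin n) : shift (Pi.single i 1) ∈ PauliN p n := by
  rw [← XmatN_eq_shift]
  exact Submonoid.subset_closure (Or.inl (Or.inr ⟨i, rfl⟩))

lemma shift_neg_mem (i : Fin n) : shift (-Pi.single i 1) ∈ PauliN p n := by
  have hp : 1 ≤ p := Nat.one_le_iff_ne_zero.2 (NeZero.ne p)
  -- The inverse of `X_i` is the power `X_i ^ (p - 1)`.
  have h : (-Pi.single i 1 : Fin n → ZMod p) = (p - 1) • Pi.single i 1 := by
    ext j
    simp [Nat.cast_sub hp]
  rw [h, shift_nsmul]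
  exact Submonoid.pow_mem _ (shift_mem i) _

lemma mul_shift_neg_mem (i : Fin n) (w : ℕ)
    (A : Matrix (Fin n → ZMod p) (Fin n → ZMod p) ℂ) (hA : A ∈ CliffN p n (w + 1)) :
    A * shift (-Pi.single i 1) ∈ CliffN p n (w + 1) := by
  cases w with
  | zero =>
    obtain ⟨φ, P, hP, rfl⟩ := hA
    exact ⟨φ, P * shift (-Pi.single i 1), Submonoid.mul_mem _ hP (shift_neg_mem i), by
      rw [Matrix.smul_mul]⟩
  | succ w =>
    obtain ⟨hA1, hA2⟩ := hA
    refine ⟨mul_mem hA1 ?_, fun P hP => ?_⟩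
    · rw [Matrix.mem_unitaryGroup_iff, Matrix.star_eq_conjTranspose, shift_conjTranspose,
        shift_mul_shift, add_neg_cancel, shift_zero]
    · have h1 : shift (-Pi.single i 1) * P * shift (Pi.single i 1) ∈ PauliN p n :=
        Submonoid.mul_mem _ (Submonoid.mul_mem _ (shift_neg_mem i) hP) (shift_mem i)
      have h2 := hA2 _ h1
      rw [Matrix.conjTranspose_mul, shift_conjTranspose, neg_neg]
      simpa only [Matrix.mul_assoc] using h2

lemma pauliPhase_norm : ‖pauliPhase p‖ = 1 := by
  unfold pauliPhase
  split_ifs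
  · simp
  · rw [show (2 * Real.pi * Complex.I / p : ℂ) = ((2 * Real.pi / p : ℝ) : ℂ) * Complex.I by
      push_cast
      ring]
    exact Complex.norm_exp_ofReal_mul_I _

/-- Every Pauli matrix is `c X(a) Z(b)` for a phase `c`. -/
lemma pauli_form (A : Matrix (Fin n → ZMod p) (Fin n → ZMod p) ℂ) (hA : A ∈ PauliN p n) :
    ∃ c : ℂ, ‖c‖ = 1 ∧ ∃ a b : Fin n → ZMod p, A = Matrix.of fun r s =>
      if r = s + a then c * psi p (b ⬝ᵥ s) else 0 := by
  induction hA using Submonoid.closure_induction with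
  | mem A hA =>
    rcases hA with (hA | ⟨i, rfl⟩) | ⟨i, rfl⟩
    · rw [Set.mem_singleton_iff] at hA
      subst hA
      refine ⟨pauliPhase p, pauliPhase_norm, 0, 0, ?_⟩
      ext r s
      simp [Matrix.one_apply]
    · refine ⟨1, by simp, Pi.single i 1, 0, ?_⟩
      rw [XmatN_eq_shift]
      ext r s
      simp [shift]
    · refine ⟨1, by simp, 0, Pi.single i 1, ?_⟩
      ext r s
      simp [ZmatN, psi_apply]
  | one =>
    refine ⟨1, by simp, 0, 0, ?_⟩
    ext r s
    simp [Matrix.one_apply]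
  | mul A B _ _ hA hB =>
    obtain ⟨c, hc, a, b, rfl⟩ := hA
    obtain ⟨c', hc', a', b', rfl⟩ := hB
    refine ⟨c * c' * psi p (b ⬝ᵥ a'), by simp [hc, hc'], a' + a, b + b', ?_⟩
    ext r s
    simp only [Matrix.mul_apply, Matrix.of_apply, mul_ite, mul_zero, Finset.sum_ite_eq',
      Finset.mem_univ, if_true, add_assoc]
    split_ifs
    · rw [dotProduct_add, add_dotProduct, AddChar.map_add_eq_mul, AddChar.map_add_eq_mul]
      ring
    · simp

/-- The theorem in terms of the diagonal entries of `U`. -/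
lemma diag_form (hp : p.Prime) (w : ℕ) (hw : w + 1 < p ∨ w = 0)
    (U : Matrix (Fin n → ZMod p) (Fin n → ZMod p) ℂ) (hU : U ∈ CliffN p n (w + 1))
    (hdiag : U.IsDiag) :
    ∃ z : ℂ, ‖z‖ = 1 ∧ ∃ g : MvPolynomial (Fin n) (ZMod p), g.totalDegree ≤ w + 1 ∧
      ∀ r, U r r = z * psi p (MvPolynomial.eval r g) := by
  induction w generalizing U with
  | zero =>
    obtain ⟨φ, P, hP, rfl⟩ := hU
    obtain ⟨c, hc, a, b, rfl⟩ := pauli_form P hP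
    have hc0 : c ≠ 0 := by
      rw [← norm_ne_zero_iff, hc]
      exact one_ne_zero
    have ha : a = 0 := by
      by_contra ha
      have h := hdiag ha
      simp [hc0] at h
    subst ha
    refine ⟨Complex.exp (φ * Complex.I) * c, by simp [hc, Complex.norm_exp_ofReal_mul_I],
      ∑ i, MvPolynomial.C (b i) * MvPolynomial.X i, ?_, fun r => ?_⟩
    · refine MvPolynomial.totalDegree_finsetSum_le fun i _ => ?_
      refine (MvPolynomial.totalDegree_mul _ _).trans ?_
      have : (MvPolynomial.X i : MvPolynomial (Fin n) (ZMod p)).totalDegree ≤ 1 := by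
        rw [MvPolynomial.X]
        exact (MvPolynomial.totalDegree_monomial_le _ _).trans (by simp)
      rw [MvPolynomial.totalDegree_C]
      omega
    · simp [dotProduct, mul_assoc]
  | succ w ih =>
    have hw' : w + 1 + 1 < p := by omega
    obtain ⟨hU1, hU2⟩ := hU
    have hUd : ∀ r s, U r s = if r = s then U s s else 0 := by
      intro r s
      split_ifs with hrs
      · rw [hrs]
      · exact hdiag hrs
    have hunit : ∀ r, U r r * star (U r r) = 1 := by
      intro r
      have h := congrFun (congrFun (Matrix.mem_unitaryGroup_iff.1 hU1) r) r
      rw [Matrix.mul_apply, Finset.sum_eq_single r, Matrix.one_apply_eq] at h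
      · simpa using h
      · intro s _ hs
        rw [hdiag hs.symm, zero_mul]
      · simp
    have hne : ∀ r, U r r ≠ 0 := fun r h => by simpa [h] using hunit r
    have hnorm : ∀ r, ‖U r r‖ = 1 := by
      intro r
      have h := congrArg norm (hunit r)
      rw [norm_mul, norm_star, norm_one] at h
      nlinarith [norm_nonneg (U r r)]
    have hentry : ∀ (i : Fin n) (r s : Fin n → ZMod p),
        (U * shift (Pi.single i 1) * Uᴴ * shift (-Pi.single i 1) : Matrix _ _ ℂ) r s =
        if r = s then U r r * star (U (r - Pi.single i 1) (r - Pi.single i 1)) else 0 := by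
      intro i r s
      obtain ⟨d, rfl⟩ : ∃ d, U = Matrix.diagonal d :=
        ⟨fun r => U r r, by
          ext r s
          rw [hUd r s, Matrix.diagonal_apply]
          split_ifs with hrs
          · rw [hrs]
          · rfl⟩
      rw [Matrix.diagonal_conjTranspose, Matrix.mul_apply]
      simp only [Matrix.mul_diagonal, Matrix.diagonal_mul, shift, Matrix.of_apply, mul_ite,
        mul_one, mul_zero, Finset.sum_ite_eq', Finset.mem_univ, if_true, Matrix.diagonal_apply_eq,
        neg_add_cancel_right]
      split_ifs with hrs
      · subst hrs
        simp [sub_eq_add_neg]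
      · simp
    have hstep : ∀ i, ∃ G : MvPolynomial (Fin n) (ZMod p), G.totalDegree ≤ w + 1 + 1 ∧
        ∀ x t, U x x = U (Function.update x i t) (Function.update x i t) *
          psi p (MvPolynomial.eval x G - MvPolynomial.eval (Function.update x i t) G) := by
      intro i
      obtain ⟨z, -, g, hg, hz⟩ := ih (by omega) _
        (mul_shift_neg_mem i w _ (hU2 _ (shift_mem i)))
        (fun r s hrs => (hentry i r s).trans (if_neg hrs))
      refine exists_potential hp hw' i (fun r => U r r) hne z g hg fun x => ?_
      have h := hz x
      rw [hentry, if_pos rfl] at h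
      rw [← h, mul_assoc, mul_comm (star _), hunit, mul_one]
    choose G hG1 hG2 using hstep
    obtain ⟨K, hK1, hK2⟩ := exists_telescope (fun r => U r r) G hG1 hG2 Finset.univ
    exact ⟨U 0 0, hnorm 0, K, hK1, fun r => by simpa [← Pi.zero_def] using hK2 r⟩

end DiagClifford

/-- For `n` qudits of prime dimension `p` and any `w` with
`1 ≤ w ≤ p-1`, every diagonal gate `U` in the `w`-th level of the Clifford hierarchy has
the form `U = e^{iφ} Σ_j ω^{Θ(j)} |j⟩⟨j|` with `ω = exp(2πi/p)` and
`Θ : Z_p^n → Z_p` a multivariate polynomial over `Z_p` of total degree at most `w`.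
In particular, up to a global phase all diagonal entries of `U` are `p`-th roots of
unity. -/
theorem diagonal_clifford_low_level_form (p n w : ℕ) [NeZero p] (hp : p.Prime)
    (hn : 1 ≤ n) (hw1 : 1 ≤ w) (hw2 : w ≤ p - 1)
    (U : Matrix (Fin n → ZMod p) (Fin n → ZMod p) ℂ) (hU : U ∈ CliffDN p n w) :
    ∃ φ : ℝ, ∃ g : MvPolynomial (Fin n) (ZMod p), g.totalDegree ≤ w ∧
      U = Complex.exp (φ * Complex.I) •
        Matrix.of (fun r c : Fin n → ZMod p =>
          if r = c then
            Complex.exp (2 * Real.pi * Complex.I *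
              (((MvPolynomial.eval r g).val : ℂ) / (p : ℂ)))
          else 0) := by
  obtain ⟨w, rfl⟩ : ∃ v, w = v + 1 := ⟨w - 1, by omega⟩
  obtain ⟨z, hz, g, hg, h⟩ := DiagClifford.diag_form hp w (by omega) U hU.1 hU.2
  refine ⟨Complex.arg z, g, hg, ?_⟩
  have hz' : Complex.exp (Complex.arg z * Complex.I) = z := by
    have := Complex.norm_mul_exp_arg_mul_I z
    rwa [hz, Complex.ofReal_one, one_mul] at this
  ext r c
  rw [hz', Matrix.smul_apply, Matrix.of_apply, smul_eq_mul]
  split_ifs with hrc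
  · subst hrc
    rw [h, DiagClifford.psi_apply]
  · rw [mul_zero]
    exact hU.2 hrc
end

section
/- Let p be prime and m ≥ 1. Every single-qudit diagonal unitary of precision m, i.e. every U = Σ_{j∈Z_p} exp(2πi Θ(j)/p^m)|j⟩⟨j| with Θ : {0,…,p−1} → Z_{p^m} an arbitrary function, lies in C^{(p−1)m}_d, the set of diagonal gates in level (p−1)m of the Clifford hierarchy. In particular, for each k ∈ Z_p the phase gate P_m[k] = Σ_{j≠k}|j⟩⟨j| + exp(2πi/p^m)|k⟩⟨k| lies in C^{(p−1)m}_d. -/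
/-!
A monomial matrix `M(θ, a)`, whose entries `exp (2πi θ(r))` sit at the positions `(r, r - a)`,
is encoded by a phase function `θ : ℤ/p → ℝ/ℤ` and a shift `a`. Let `T` be the difference operator
`(T θ)(r) = θ(r + 1) - θ(r)`.

* Paulis have the form `M(η, b)` with `T² η = 0` (`exists_of_mem_pauli`), and conversely
  `T² θ = 0` forces `θ` to be affine with slope in `p⁻¹ℤ/ℤ`, so that `M(θ, a)` is a Pauli
  up to a phase (`mono_mem_cliff_one`).
* Conjugating gives `M(θ, a) M(η, b) M(θ, a)† = M(θ - θ(· - b) + η(· - a), b)`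
  (`mono_conj`). Since `T` divides `1 - S⁻ᵇ`, where `S = 1 + T` is the translation, conjugating a
  Pauli lowers the order of nilpotency by one. Hence `T ^ (k + 1) θ = 0` with `k ≥ 1` implies
  `M(θ, a) ∈ C^k` (`mono_mem_cliff`).
* From `(1 + T) ^ p = S ^ p = 1` and the divisibility of the middle binomial coefficients by `p`,
  `T ^ p` is `p T` times an operator, so `T ^ ((p - 1) m + 1)` is divisible by `p ^ m`
  (`diff_pow_eq`). It therefore kills every phase function of precision `m`.
-/

open Matrix Complex

/-- The single-qudit Pauli group `⟨iI, X, Z⟩` (`p = 2`) or `⟨ωI, X, Z⟩` (`p > 2`).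
All generators have finite order, so the monoid they generate is already a group. -/
noncomputable def Pauli1 (p : ℕ) [NeZero p] : Set (Matrix (ZMod p) (ZMod p) ℂ) :=
  ↑(Submonoid.closure {pauliPhase p • (1 : Matrix (ZMod p) (ZMod p) ℂ), Xmat1 p, Zmat1 p})

/-- The Clifford hierarchy on a single qudit:
`C^1 = {e^{iφ} P : P ∈ P}`, and `C^k = {U unitary | U P U† ∈ C^{k-1} ∀ P ∈ P}` for `k ≥ 2`. -/
noncomputable def Cliff1 (p : ℕ) [NeZero p] : ℕ → Set (Matrix (ZMod p) (ZMod p) ℂ)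
  | 0 => ∅
  | 1 => {U | ∃ φ : ℝ, ∃ P ∈ Pauli1 p, U = Complex.exp (φ * Complex.I) • P}
  | (k + 2) => {U | U ∈ Matrix.unitaryGroup (ZMod p) ℂ ∧
      ∀ P ∈ Pauli1 p, U * P * Uᴴ ∈ Cliff1 p (k + 1)}

/-- The diagonal gates in the `k`-th level of the single-qudit Clifford hierarchy. -/
noncomputable def CliffD1 (p : ℕ) [NeZero p] (k : ℕ) : Set (Matrix (ZMod p) (ZMod p) ℂ) :=
  {U | U ∈ Cliff1 p k ∧ U.IsDiag}

/-! ### Difference operators on phase functions -/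

/-- Translation `(S θ)(r) = θ(r + 1)` of phase functions. -/
def shiftOp (p : ℕ) : Module.End ℤ (ZMod p → UnitAddCircle) :=
  LinearMap.funLeft ℤ UnitAddCircle (fun r : ZMod p => r + 1)

/-- The difference operator `T = S - 1`. -/
def diffOp (p : ℕ) : Module.End ℤ (ZMod p → UnitAddCircle) := shiftOp p - 1

lemma diffOp_apply (p : ℕ) (θ : ZMod p → UnitAddCircle) (r : ZMod p) :
    diffOp p θ r = θ (r + 1) - θ r := rfl

lemma shiftOp_pow_apply (p n : ℕ) (θ : ZMod p → UnitAddCircle) (r : ZMod p) :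
    (shiftOp p ^ n) θ r = θ (r + n) := by
  induction n generalizing r with
  | zero => simp
  | succ n ih =>
    rw [pow_succ', Module.End.mul_apply]
    change (shiftOp p ^ n) θ (r + 1) = _
    rw [ih]
    push_cast
    congr 1
    ring

lemma shiftOp_pow_self (p : ℕ) : shiftOp p ^ p = 1 := by
  ext θ r
  simp [shiftOp_pow_apply]

/-- Since `T ^ p = -p T r` for some operator `r`, each further factor `T ^ (p - 1)` contributes
a factor `p`. -/
lemma diff_pow_eq (p : ℕ) (hp : p.Prime) (m : ℕ) :
    ∃ q : Module.End ℤ (ZMod p → UnitAddCircle),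
      diffOp p ^ ((p - 1) * m + 1) = (p : Module.End ℤ (ZMod p → UnitAddCircle)) ^ m * q := by
  obtain ⟨r, hr⟩ := (Commute.one_right (diffOp p)).exists_add_pow_prime_eq hp
  have hS : diffOp p + 1 = shiftOp p := by simp [diffOp]
  rw [hS, shiftOp_pow_self, one_pow, mul_one] at hr
  have hT : diffOp p ^ p = -(diffOp p * (p * r)) := by
    have h1 : (p : Module.End ℤ (ZMod p → UnitAddCircle)) * diffOp p * r
        = diffOp p * (p * r) := by
      rw [(Nat.cast_commute p (diffOp p)).eq, mul_assoc]
    rw [h1] at hr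
    have h2 : diffOp p ^ p + diffOp p * (p * r) = 0 := by
      have := hr.symm
      rw [add_right_comm] at this
      simpa using this
    exact eq_neg_of_add_eq_zero_left h2
  induction m with
  | zero => exact ⟨diffOp p, by simp⟩
  | succ m ih =>
    obtain ⟨q, hq⟩ := ih
    refine ⟨-(q * r), ?_⟩
    have he : (p - 1) * (m + 1) + 1 = (p - 1) * m + p := by
      have := hp.one_le
      rw [mul_add]; omega
    rw [he, pow_add, hT, mul_neg, ← mul_assoc, ← pow_succ, hq, pow_succ, mul_neg]
    congr 1
    rw [mul_assoc, mul_assoc, ← mul_assoc q, ← (Nat.cast_commute p q).eq, mul_assoc]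

lemma diff_pow_apply_eq_zero {p : ℕ} (hp : p.Prime) {m : ℕ} {θ : ZMod p → UnitAddCircle}
    (hθ : p ^ m • θ = 0) : (diffOp p ^ ((p - 1) * m + 1)) θ = 0 := by
  obtain ⟨q, hq⟩ := diff_pow_eq p hp m
  rw [hq, ← Nat.cast_pow, (Nat.cast_commute (p ^ m) q).eq, Module.End.mul_apply,
    Module.End.natCast_apply, hθ, map_zero]

lemma diff_pow_eq_zero_of_le {p k l : ℕ} (hkl : k ≤ l) {θ : ZMod p → UnitAddCircle}
    (h : (diffOp p ^ k) θ = 0) : (diffOp p ^ l) θ = 0 := by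
  rw [← Nat.sub_add_cancel hkl, pow_add, Module.End.mul_apply, h, map_zero]

lemma translate_eq {p : ℕ} [NeZero p] (θ : ZMod p → UnitAddCircle) (a : ZMod p) :
    (fun r => θ (r - a)) = (shiftOp p ^ (-a).val) θ := by
  funext r
  rw [shiftOp_pow_apply, ZMod.natCast_zmod_val, sub_eq_add_neg]

lemma commute_diff_shift (p k n : ℕ) : Commute (diffOp p ^ k) (shiftOp p ^ n) :=
  Commute.pow_pow ((Commute.refl _).sub_left (Commute.one_left _)) k n

lemma diff_pow_translate {p : ℕ} [NeZero p] {k : ℕ} {θ : ZMod p → UnitAddCircle}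
    (h : (diffOp p ^ k) θ = 0) (a : ZMod p) : (diffOp p ^ k) (fun r => θ (r - a)) = 0 := by
  rw [translate_eq, ← Module.End.mul_apply, (commute_diff_shift p k _).eq,
    Module.End.mul_apply, h, map_zero]

/-- `θ - θ(· - b)` is the image of `T θ` under a geometric sum in `S`. -/
lemma diff_pow_sub_translate {p : ℕ} [NeZero p] {k : ℕ} {θ : ZMod p → UnitAddCircle}
    (h : (diffOp p ^ (k + 1)) θ = 0) (b : ZMod p) :
    (diffOp p ^ k) (θ - fun r => θ (r - b)) = 0 := by
  have hg : shiftOp p ^ (-b).val - 1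
      = (∑ i ∈ Finset.range (-b).val, shiftOp p ^ i) * diffOp p := (geom_sum_mul _ _).symm
  have hc : Commute (diffOp p ^ k) (∑ i ∈ Finset.range (-b).val, shiftOp p ^ i) :=
    Commute.sum_right _ _ _ fun i _ => commute_diff_shift p k i
  have h1 : (θ - fun r => θ (r - b)) = -((shiftOp p ^ (-b).val - 1) θ) := by
    rw [translate_eq]; simp
  rw [h1, hg, map_neg, ← Module.End.mul_apply, ← mul_assoc, hc.eq, mul_assoc, ← pow_succ,
    Module.End.mul_apply, h, map_zero, neg_zero]

/-! ### Monomial matrices -/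

/-- The monomial matrix `M(θ, a)` sending `|c⟩` to `exp (2πi θ(c + a)) |c + a⟩`. -/
noncomputable def mono {p : ℕ} (θ : ZMod p → UnitAddCircle) (a : ZMod p) :
    Matrix (ZMod p) (ZMod p) ℂ :=
  Matrix.of fun r c => if r = c + a then (AddCircle.toCircle (θ r) : ℂ) else 0

lemma mono_mul {p : ℕ} [NeZero p] (θ η : ZMod p → UnitAddCircle) (a b : ZMod p) :
    mono θ a * mono η b = mono (θ + fun r => η (r - a)) (a + b) := by
  ext r c
  rw [Matrix.mul_apply, Finset.sum_eq_single (r - a)]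
  · simp only [mono, Matrix.of_apply, sub_add_cancel, if_true, Pi.add_apply,
      AddCircle.toCircle_add, Circle.coe_mul, sub_eq_iff_eq_add, mul_ite, mul_zero]
    have : c + b + a = c + (a + b) := by ring
    rw [this]
  · intro s _ hs
    have : r ≠ s + a := fun h => hs (by rw [h, add_sub_cancel_right])
    simp [mono, this]
  · simp

lemma mono_conjTranspose {p : ℕ} [NeZero p] (θ : ZMod p → UnitAddCircle) (a : ZMod p) :
    (mono θ a)ᴴ = mono (fun r => -θ (r + a)) (-a) := by
  ext r c
  simp only [mono, Matrix.conjTranspose_apply, Matrix.of_apply]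
  by_cases h : c = r + a
  · subst h
    simp [AddCircle.toCircle_neg, ← Circle.coe_inv_eq_conj]
  · have : r ≠ c + -a := fun h' => h (by rw [h']; ring)
    simp [h, this]

lemma mono_zero_zero {p : ℕ} [NeZero p] : mono (0 : ZMod p → UnitAddCircle) 0 = 1 := by
  ext r c
  simp [mono, Matrix.one_apply]

lemma mono_mem_unitary {p : ℕ} [NeZero p] (θ : ZMod p → UnitAddCircle) (a : ZMod p) :
    mono θ a ∈ Matrix.unitaryGroup (ZMod p) ℂ := by
  rw [Matrix.mem_unitaryGroup_iff, Matrix.star_eq_conjTranspose, mono_conjTranspose, mono_mul,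
    ← mono_zero_zero]
  congr 1
  · funext r; simp
  · ring

lemma mono_conj {p : ℕ} [NeZero p] (θ η : ZMod p → UnitAddCircle) (a b : ZMod p) :
    mono θ a * mono η b * (mono θ a)ᴴ
      = mono ((θ - fun r => θ (r - b)) + fun r => η (r - a)) b := by
  rw [mono_conjTranspose, mono_mul, mono_mul]
  congr 1
  · funext r
    have : r - (a + b) + a = r - b := by ring
    simp only [Pi.add_apply, Pi.sub_apply, this]
    abel
  · ring

/-! ### Paulis as monomial matrices with affine phase -/

lemma xmat_eq (p : ℕ) [NeZero p] : Xmat1 p = mono 0 1 := by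
  ext r c
  simp [Xmat1, mono]

lemma zmat_eq (p : ℕ) [NeZero p] : Zmat1 p = mono (fun r => ZMod.toAddCircle r) 0 := by
  ext r c
  simp only [Zmat1, mono, Matrix.of_apply, add_zero]
  refine ite_congr rfl (fun h => ?_) fun _ => rfl
  subst h
  rw [ZMod.toAddCircle_apply, AddCircle.toCircle_apply_mk, Circle.coe_exp]
  congr 1
  push_cast
  ring

lemma toCircle_smul_mono {p : ℕ} [NeZero p] (t : UnitAddCircle) (θ : ZMod p → UnitAddCircle)
    (a : ZMod p) :
    (AddCircle.toCircle t : ℂ) • mono θ a = mono ((fun _ => t) + θ) a := by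
  ext r c
  simp [mono, AddCircle.toCircle_add]

lemma exists_pauliPhase_s19 (p : ℕ) : ∃ t : UnitAddCircle, pauliPhase p = AddCircle.toCircle t := by
  unfold pauliPhase
  split_ifs
  · refine ⟨((1 / 4 : ℝ) : UnitAddCircle), ?_⟩
    rw [AddCircle.toCircle_apply_mk, Circle.coe_exp]
    refine Complex.exp_pi_div_two_mul_I.symm.trans (congrArg _ ?_)
    push_cast
    ring
  · refine ⟨((1 / p : ℝ) : UnitAddCircle), ?_⟩
    rw [AddCircle.toCircle_apply_mk, Circle.coe_exp]
    congr 1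
    push_cast
    ring

lemma diff_const {p : ℕ} (t : UnitAddCircle) : diffOp p (fun _ => t) = 0 := by
  funext r
  simp [diffOp_apply]

/-- The generators are monomial matrices with affine phase, and these are closed under products;
affineness of the phase is encoded as `T² η = 0`. -/
lemma exists_of_mem_pauli {p : ℕ} [NeZero p] {P : Matrix (ZMod p) (ZMod p) ℂ}
    (hP : P ∈ Pauli1 p) : ∃ η b, (diffOp p ^ 2) η = 0 ∧ P = mono η b := by
  induction hP using Submonoid.closure_induction with
  | mem x hx =>
    rcases hx with rfl | rfl | rfl
    · obtain ⟨t, ht⟩ := exists_pauliPhase_s19 p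
      refine ⟨(fun _ => t) + 0, 0, ?_, ?_⟩
      · rw [add_zero, pow_two, Module.End.mul_apply, diff_const, map_zero]
      · rw [ht, ← mono_zero_zero, toCircle_smul_mono]
    · exact ⟨0, 1, map_zero _, xmat_eq p⟩
    · refine ⟨_, 0, ?_, zmat_eq p⟩
      have : diffOp p (fun r => ZMod.toAddCircle r) = fun _ => ZMod.toAddCircle (1 : ZMod p) := by
        funext r
        simp [diffOp_apply]
      rw [pow_two, Module.End.mul_apply, this, diff_const]
  | one => exact ⟨0, 0, map_zero _, mono_zero_zero.symm⟩
  | mul x y _ _ hx hy =>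
    obtain ⟨η, a, hη, rfl⟩ := hx
    obtain ⟨ξ, b, hξ, rfl⟩ := hy
    refine ⟨_, _, ?_, mono_mul _ _ _ _⟩
    rw [map_add, hη, diff_pow_translate hξ, add_zero]

lemma xmat_pow (p : ℕ) [NeZero p] (n : ℕ) : Xmat1 p ^ n = mono 0 (n : ZMod p) := by
  induction n with
  | zero => simp [mono_zero_zero]
  | succ n ih =>
    rw [pow_succ, ih, xmat_eq, mono_mul]
    congr 1
    · funext r; simp
    · push_cast; rfl

lemma zmat_pow (p : ℕ) [NeZero p] (n : ℕ) :
    Zmat1 p ^ n = mono (fun r => n • ZMod.toAddCircle r) 0 := by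
  induction n with
  | zero => rw [pow_zero, ← mono_zero_zero]; congr 1
  | succ n ih =>
    rw [pow_succ, ih, zmat_eq, mono_mul]
    congr 1
    · funext r; simp [succ_nsmul]
    · simp

/-- A function killed by `T²` is affine; going once around `ℤ/p` shows that its slope is
`p`-torsion. -/
lemma affine_of_diff_sq {p : ℕ} [NeZero p] {θ : ZMod p → UnitAddCircle}
    (h : (diffOp p ^ 2) θ = 0) :
    ∃ n : ℕ, ∀ r, θ r = θ 0 + n • ZMod.toAddCircle r := by
  rw [pow_two, Module.End.mul_apply] at h
  have hconst : ∀ n : ℕ, diffOp p θ n = diffOp p θ 0 := by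
    intro n
    induction n with
    | zero => simp
    | succ n ih =>
      have := congrFun h n
      rw [diffOp_apply, Pi.zero_apply, sub_eq_zero] at this
      push_cast
      rw [this, ih]
  have hlin : ∀ n : ℕ, θ n = θ 0 + n • diffOp p θ 0 := by
    intro n
    induction n with
    | zero => simp
    | succ n ih =>
      have := hconst n
      rw [diffOp_apply, sub_eq_iff_eq_add] at this
      push_cast
      rw [this, ih, succ_nsmul]
      abel
  have htors : p • diffOp p θ 0 = 0 := by
    have := hlin p
    rw [ZMod.natCast_self] at this
    exact left_eq_add.mp this
  obtain ⟨n, -, hn⟩ := (AddCircle.nsmul_eq_zero_iff (NeZero.pos p)).mp htors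
  refine ⟨n, fun r => ?_⟩
  have hr := hlin r.val
  rw [ZMod.natCast_zmod_val] at hr
  rw [hr, ← hn, ZMod.toAddCircle_apply, ← AddCircle.coe_nsmul, ← AddCircle.coe_nsmul]
  congr 2
  simp only [nsmul_eq_mul]
  ring

lemma mono_mem_cliff_one {p : ℕ} [NeZero p] {θ : ZMod p → UnitAddCircle}
    (h : (diffOp p ^ 2) θ = 0) (a : ZMod p) : mono θ a ∈ Cliff1 p 1 := by
  obtain ⟨n, hn⟩ := affine_of_diff_sq h
  obtain ⟨x, hx⟩ := QuotientAddGroup.mk_surjective (θ 0)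
  have hx' : (x : UnitAddCircle) = θ 0 := hx
  refine ⟨2 * Real.pi * x, Zmat1 p ^ n * Xmat1 p ^ a.val, ?_, ?_⟩
  · exact mul_mem (pow_mem (Submonoid.subset_closure (by simp)) _)
      (pow_mem (Submonoid.subset_closure (by simp)) _)
  · have hc : Complex.exp ((2 * Real.pi * x : ℝ) * Complex.I)
        = (AddCircle.toCircle (θ 0) : ℂ) := by
      rw [← hx', AddCircle.toCircle_apply_mk, Circle.coe_exp, div_one]
    rw [hc, zmat_pow, xmat_pow, mono_mul, toCircle_smul_mono]
    congr 1
    · funext r; simpa using hn r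
    · simp

/-! ### Nilpotency order and hierarchy level -/

/-- Conjugating a Pauli lowers by one the power of `T` that kills the phase; the phase `η` of the
Pauli itself is harmless because the remaining power of `T` is at least `2`. -/
lemma mono_mem_cliff {p : ℕ} [NeZero p] (k : ℕ) {θ : ZMod p → UnitAddCircle}
    (h : (diffOp p ^ (k + 2)) θ = 0) (a : ZMod p) : mono θ a ∈ Cliff1 p (k + 1) := by
  induction k generalizing θ a with
  | zero => exact mono_mem_cliff_one h a
  | succ k ih =>
    refine ⟨mono_mem_unitary θ a, fun P hP => ?_⟩
    obtain ⟨η, b, hη, rfl⟩ := exists_of_mem_pauli hP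
    rw [mono_conj]
    apply ih
    rw [map_add, diff_pow_sub_translate h, zero_add]
    exact diff_pow_eq_zero_of_le (by omega) (diff_pow_translate hη a)

lemma mono_mem_cliffD {p m : ℕ} [NeZero p] (hp : p.Prime) (hm : 1 ≤ m)
    {θ : ZMod p → UnitAddCircle} (hθ : p ^ m • θ = 0) :
    mono θ 0 ∈ CliffD1 p ((p - 1) * m) := by
  refine ⟨?_, fun r c hrc => by simp [mono, hrc]⟩
  obtain ⟨k, hk⟩ : ∃ k, (p - 1) * m = k + 1 :=
    Nat.exists_eq_succ_of_ne_zero (Nat.mul_ne_zero (by have := hp.two_le; omega) (by omega))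
  have := diff_pow_apply_eq_zero hp hθ
  rw [hk] at this ⊢
  exact mono_mem_cliff k this 0

/-- Let `p` be prime and `m ≥ 1`.  Every single-qudit diagonal unitary
of precision `m`, i.e. every `U = Σ_j exp(2πi Θ(j)/p^m)|j⟩⟨j|` with
`Θ : Z_p → Z_{p^m}` an arbitrary function, lies in `C^{(p-1)m}_d`.  In particular each
phase gate `P_m[k]` lies in `C^{(p-1)m}_d`. -/
theorem precision_m_in_clifford (p m : ℕ) [NeZero p] (hp : p.Prime) (hm : 1 ≤ m) :
    (∀ Θ : ZMod p → ZMod (p ^ m),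
      Matrix.of (fun r c : ZMod p =>
          if r = c then
            Complex.exp (2 * Real.pi * Complex.I * (((Θ r).val : ℂ) / (p : ℂ) ^ m))
          else 0) ∈ CliffD1 p ((p - 1) * m)) ∧
    (∀ k : ZMod p, PhaseGate p m k ∈ CliffD1 p ((p - 1) * m)) := by
  have key : ∀ Θ : ZMod p → ZMod (p ^ m),
      Matrix.of (fun r c : ZMod p =>
          if r = c then
            Complex.exp (2 * Real.pi * Complex.I * (((Θ r).val : ℂ) / (p : ℂ) ^ m))
          else 0) ∈ CliffD1 p ((p - 1) * m) := by
    intro Θ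
    have hp0 : (p : ℝ) ^ m ≠ 0 := pow_ne_zero _ (by exact_mod_cast hp.ne_zero)
    have hθ : p ^ m • (fun r => (((Θ r).val / (p : ℝ) ^ m : ℝ) : UnitAddCircle)) = 0 := by
      funext r
      rw [Pi.smul_apply, ← AddCircle.coe_nsmul, nsmul_eq_mul]
      push_cast
      rw [mul_div_cancel₀ _ hp0]
      exact (AddCircle.coe_eq_zero_iff 1).mpr ⟨(Θ r).val, by simp⟩
    convert mono_mem_cliffD hp hm hθ using 1
    ext r c
    simp only [mono, Matrix.of_apply, add_zero]
    refine ite_congr rfl (fun _ => ?_) fun _ => rfl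
    rw [AddCircle.toCircle_apply_mk, Circle.coe_exp]
    congr 1
    push_cast
    ring
  refine ⟨key, fun k => ?_⟩
  have : Fact (1 < p ^ m) := ⟨Nat.one_lt_pow (by omega) hp.one_lt⟩
  convert key (fun r => if r = k then 1 else 0) using 1
  ext r c
  simp only [PhaseGate, Matrix.of_apply]
  refine ite_congr rfl (fun _ => ?_) fun _ => rfl
  by_cases hr : r = k
  · simp only [hr, if_true, ZMod.val_one, Nat.cast_one]
    congr 1
    ring
  · simp [hr]
end
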